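/- arXiv:1901.03787 — 12 statements merged into one kernel-verified Lean document; each statement's English description precedes it below -/
import Mathlib

section
/- Let (e, f) be an admissible pair with associated monomial ν = ⟨e; f⟩, and let k : {1,2,3,…} → ℕ be finitely supported. If k(1) = 0 and k(i) ≤ e(i) for all i ≥ 2, then ∏_{i≥1} ∂^{k(i)}(ξ_i^{ν(i)}) = (∏_{i≥2} e(i)!/(e(i)−k(i))!) · ⟨e−k; f+k⟩, where the scalar ∏_{i≥2} e(i)!/(e(i)−k(i))! is invertible in 𝔽_p; if instead k(1) ≥ 1 or k(i) > e(i) for some i ≥ 2, then ∏_{i≥1} ∂^{k(i)}(ξ_i^{ν(i)}) = 0. In particular, every nonzero product of this form is, up to an invertible scalar, the monomial with admissible bracket expression ⟨e−k; f+k⟩. -/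
/-!
Since `∂` is a derivation in characteristic `p`, it kills every `p`-th power, so it is linear over
`p`-th powers. As `∂ξ_{i+1} = ξ_i^p` is itself a `p`-th power, each application of `∂` to
`ξ_{i+1}^{e + p f}` with `e < p` only differentiates the part `ξ_{i+1}^e`, and trades one factor
`ξ_{i+1}` for `ξ_i^p`. Hence
`∂^k (ξ_{i+1}^{e + p f}) = e (e - 1) ⋯ (e - k + 1) ξ_{i+1}^{e - k + p f} ξ_i^{p k}`
(`iterate_X_pow`); the falling factorial vanishes when `k > e`. Multiplying over `i` and collecting
the factors `ξ_i^{p k}` with the powers of `ξ_i` gives the bracket `⟨e - k; f + k⟩`. The scalar is a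
unit because its factors divide the `e(i)!` with `e(i) < p`.
-/

open MvPolynomial

namespace MoveTerms

variable {p : ℕ} (D : Derivation (ZMod p) (MvPolynomial ℕ (ZMod p)) (MvPolynomial ℕ (ZMod p)))

lemma D_pow_mul (x : MvPolynomial ℕ (ZMod p)) (k : ℕ) : D (x ^ (p * k)) = 0 := by
  rw [Derivation.leibniz_pow, ← Nat.cast_smul_eq_nsmul (ZMod p)]
  simp

/-- Formula for the iterates of `∂` on a power of a single variable. There is no condition `k ≤ e`:
for `k > e` the falling factorial is `0`, and the truncated exponent `e - k` is irrelevant. -/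
lemma iterate_X_pow (hDn : ∀ i : ℕ, D (X (i + 1)) = X i ^ p) (m e f k : ℕ) :
    (D.toLinearMap ^ k) (X (m + 1) ^ (e + p * f)) =
      (e.descFactorial k : ZMod p) • (X (m + 1) ^ (e - k + p * f) * X m ^ (p * k)) := by
  induction k with
  | zero => simp
  | succ k ih =>
    rw [pow_succ', Module.End.mul_apply, ih, map_smul, Nat.descFactorial_succ]
    rcases Nat.eq_zero_or_pos (e - k) with h | h
    · have h1 : D.toLinearMap (X (m + 1) ^ (e - k + p * f) * X m ^ (p * k)) = 0 := by
        change D _ = 0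
        rw [Derivation.leibniz, D_pow_mul, h, zero_add, D_pow_mul]
        simp
      rw [h1, h]
      simp
    · have h1 : D.toLinearMap (X (m + 1) ^ (e - k + p * f) * X m ^ (p * k)) =
          ((e - k : ℕ) : ZMod p) •
            (X (m + 1) ^ (e - (k + 1) + p * f) * X m ^ (p * (k + 1))) := by
        change D _ = _
        rw [Derivation.leibniz, D_pow_mul, Derivation.leibniz_pow, hDn,
          ← Nat.cast_smul_eq_nsmul (ZMod p)]
        have h2 : e - k + p * f - 1 = e - (k + 1) + p * f := by omega
        rw [h2]
        simp only [Nat.cast_add, Nat.cast_mul, CharP.cast_eq_zero, zero_mul, add_zero,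
          smul_eq_mul, mul_smul_comm]
        ring_nf
      rw [h1, smul_smul, Nat.cast_mul, mul_comm]

end MoveTerms

/-- paper's Lemma 4.8, "move-terms".
Indexing convention: the variable `X i` of `MvPolynomial ℕ (ZMod p)` denotes `ξ_{i+1}`,
so exponent functions `ν : ℕ → ℕ` have `ν i` = exponent of `ξ_{i+1}`; `e i`, `f i`
denote the paper's `e(i+2)`, `f(i+2)`; and `k i` denotes the paper's `k(i+1)`.
`∂` is the derivation with `∂ξ₁ = 1` (`D (X 0) = 1`) and `∂ξ_{i+2} = ξ_{i+1}^p`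
(`D (X (i+1)) = X i ^ p`).  The admissible pair `(e, f)` has associated monomial
`ν = ⟨e; f⟩`, i.e. `ν 0 = p * f 0` and `ν (m+1) = e m + p * f (m+1)`.  All functions
are supported below `N`, and "products over all `i`" are realized as products over
`Finset.range (N+2)` (all further factors are `1`).

If `k(1) = 0` and `k(i) ≤ e(i)` for `i ≥ 2`, then
`∏_i ∂^{k(i)}(ξ_i^{ν(i)}) = (∏_{i≥2} e(i)!/(e(i)−k(i))!) · ⟨e−k; f+k⟩`
with the scalar invertible in `𝔽_p`; otherwise the product vanishes. -/
theorem stmt_1 (p : ℕ) (hp : p.Prime) (hodd : Odd p)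
    (D : Derivation (ZMod p) (MvPolynomial ℕ (ZMod p)) (MvPolynomial ℕ (ZMod p)))
    (hD1 : D (X 0) = 1)
    (hDn : ∀ i : ℕ, D (X (i + 1)) = X i ^ p)
    (e f k ν : ℕ → ℕ) (N : ℕ)
    (hsupp : ∀ i, N ≤ i → e i = 0 ∧ f i = 0 ∧ k i = 0)
    (hadm : ∀ i, e i ≤ p - 1)
    (hν0 : ν 0 = p * f 0) (hνs : ∀ m, ν (m + 1) = e m + p * f (m + 1)) :
    ((k 0 = 0 ∧ ∀ m, k (m + 1) ≤ e m) →
      ((∏ i ∈ Finset.range (N + 2), (D.toLinearMap ^ k i) (X i ^ ν i)) =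
        (((∏ m ∈ Finset.range (N + 2),
            (e m).factorial / (e m - k (m + 1)).factorial : ℕ) : ZMod p) •
          ∏ i ∈ Finset.range (N + 2),
            (X i : MvPolynomial ℕ (ZMod p)) ^
              (if i = 0 then p * (f 0 + k 1)
               else (e (i - 1) - k i) + p * (f i + k (i + 1)))) ∧
      IsUnit ((∏ m ∈ Finset.range (N + 2),
            (e m).factorial / (e m - k (m + 1)).factorial : ℕ) : ZMod p))) ∧
    ((1 ≤ k 0 ∨ ∃ m, e m < k (m + 1)) →
      (∏ i ∈ Finset.range (N + 2), (D.toLinearMap ^ k i) (X i ^ ν i)) = 0) := by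
  have hN : k (N + 2) = 0 := (hsupp _ (by omega)).2.2
  have hN' : e (N + 1) = 0 ∧ k (N + 2) = 0 := ⟨(hsupp _ (by omega)).1, hN⟩
  refine ⟨fun ⟨hk0, hke⟩ => ⟨?_, ?_⟩, ?_⟩
  · have hdesc : ∀ m, (e m).factorial / (e m - k (m + 1)).factorial =
        (e m).descFactorial (k (m + 1)) := fun m =>
      (Nat.descFactorial_eq_div (hke m)).symm
    simp only [hdesc]
    rw [Finset.prod_range_succ', hk0, hν0, pow_zero, Module.End.one_apply]
    simp only [hνs, MoveTerms.iterate_X_pow D hDn, Algebra.smul_def]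
    rw [Finset.prod_mul_distrib, Finset.prod_mul_distrib]
    -- The last scalar factor, of index `N + 1`, is `1` because `e` and `k` vanish there.
    rw [Finset.prod_range_succ (fun m => (e m).descFactorial (k (m + 1))) (N + 1), hN'.1, hN,
      Nat.descFactorial_zero, mul_one, Nat.cast_prod, map_prod, mul_assoc]
    congr 1
    -- The factors `X m ^ (p * k (m + 1))` are absorbed, the top one (`m = N + 1`) being `1`.
    have hsplit : ∀ i, (X i : MvPolynomial ℕ (ZMod p)) ^ (if i = 0 then p * (f 0 + k 1)
          else (e (i - 1) - k i) + p * (f i + k (i + 1))) =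
        X i ^ (if i = 0 then p * f 0 else (e (i - 1) - k i) + p * f i) *
          X i ^ (p * k (i + 1)) := by
      intro i
      rw [← pow_add]
      congr 1
      split_ifs with h
      · subst h; ring
      · ring
    simp only [hsplit]
    rw [Finset.prod_mul_distrib,
      Finset.prod_range_succ (fun i => (X i : MvPolynomial ℕ (ZMod p)) ^ (p * k (i + 1))) (N + 1),
      hN, mul_zero, pow_zero, mul_one,
      Finset.prod_range_succ' (fun i => (X i : MvPolynomial ℕ (ZMod p)) ^
        (if i = 0 then p * f 0 else (e (i - 1) - k i) + p * f i)) (N + 1)]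
    simp only [Nat.add_sub_cancel, if_true, Nat.succ_ne_zero, if_false]
    ring
  · have := Fact.mk hp
    rw [isUnit_iff_ne_zero, Ne, ZMod.natCast_eq_zero_iff, hp.prime.dvd_finsetProd_iff]
    rintro ⟨m, -, hm⟩
    have h1 : p ∣ (e m).factorial :=
      hm.trans (Nat.div_dvd_of_dvd (Nat.factorial_dvd_factorial (Nat.sub_le _ _)))
    have h2 := (hp.dvd_factorial).1 h1
    have h3 := hadm m
    have h4 := hp.pos
    omega
  · rintro (h | ⟨m, hm⟩)
    · refine Finset.prod_eq_zero (i := 0) (by simp) ?_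
      obtain ⟨j, hj⟩ := Nat.exists_eq_add_of_le' h
      have h0 : D.toLinearMap (X 0 ^ (p * f 0)) = 0 := MoveTerms.D_pow_mul D _ _
      rw [hj, hν0, pow_succ, Module.End.mul_apply, h0, map_zero]
    · have hmN : m + 1 < N := by
        by_contra hcon
        have := (hsupp (m + 1) (by omega)).2.2
        omega
      refine Finset.prod_eq_zero (i := m + 1) (by simp; omega) ?_
      rw [hνs, MoveTerms.iterate_X_pow D hDn, Nat.descFactorial_of_lt hm, Nat.cast_zero, zero_smul]
end

section
/- Let (e, f) be an admissible pair. Define c(i) = min(e(i)+f(i), p−1) and d(i) = e(i)+f(i) − c(i) for all i ≥ 2. Then (c, d) is an admissible pair, (e, f) ≤ (c, d), and (c, d) is the greatest element among all admissible pairs lying above (e, f): for every admissible pair (E, F) with (e, f) ≤ (E, F), one has (E, F) ≤ (c, d). -/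
/-- The partial order on admissible pairs ("moving terms from left to right"):
`(e, f) ≤ (E, F)` iff there is a finitely supported `g` with `e(i) = E(i) − g(i)`
and `f(i) = F(i) + g(i)` for all `i`. -/
def PairLE (e f E F : ℕ →₀ ℕ) : Prop :=
  ∃ g : ℕ →₀ ℕ, ∀ i, e i + g i = E i ∧ f i = F i + g i

/-- paper's Lemma 4.9, "til-W".  Indexing convention: `e i`, `f i`
denote the paper's `e(i+2)`, `f(i+2)`.  Given an admissible pair `(e, f)`, the pair
`(c, d)` with `c(i) = min(e(i)+f(i), p−1)` and `d(i) = e(i)+f(i)−c(i)` is admissible,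
lies above `(e, f)`, and is the greatest admissible pair above `(e, f)`. -/
theorem stmt_3 (p : ℕ) (hp : p.Prime) (hodd : Odd p)
    (e f : ℕ →₀ ℕ) (hadm : ∀ i, e i ≤ p - 1)
    (c d : ℕ →₀ ℕ)
    (hc : ∀ i, c i = min (e i + f i) (p - 1))
    (hd : ∀ i, d i = e i + f i - c i) :
    (∀ i, c i ≤ p - 1) ∧ PairLE e f c d ∧
      ∀ E F : ℕ →₀ ℕ, (∀ i, E i ≤ p - 1) → PairLE e f E F → PairLE E F c d := by
  -- A move preserves each sum `e i + f i`, so a pair above `(e, f)` is determined by its first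
  -- component, and `c i` is the largest value that the sum and the bound `p - 1` allow there.
  -- Hence the truncated differences `c - e` and `c - E` are genuine ones.
  refine ⟨fun i => ?_, ⟨c - e, fun i => ?_⟩, ?_⟩
  · have := hc i
    omega
  · have := hadm i
    have := hc i
    have := hd i
    rw [Finsupp.tsub_apply]
    omega
  · rintro E F hE ⟨g, hg⟩
    refine ⟨c - E, fun i => ?_⟩
    have := hE i
    have := hg i
    have := hc i
    have := hd i
    rw [Finsupp.tsub_apply]
    omega
end

section
/- Let ν : {1,2,3,…} → ℕ be finitely supported with p ∣ ν(1) (the exponent function of a monomial of B), and suppose ν(n) ≥ p(p−1) for some n ≥ 1 (i.e. the monomial is divisible by ξ_n^{p(p−1)}). Let (e, f) be the unique admissible pair with ⟨e; f⟩ = ν, and set c(i) = min(e(i)+f(i), p−1). Then c(n+1) = p−1. -/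
/-- key computation in the paper's Lemma 4.15.
Indexing convention: `ν i` is the exponent of `ξ_{i+1}` (so `p ∣ ν(1)` reads
`p ∣ ν 0`, and "`ν(n) ≥ p(p−1)` for some `n ≥ 1`" reads `p*(p−1) ≤ ν m` for some
`m : ℕ`); `e i`, `f i` denote the paper's `e(i+2)`, `f(i+2)`, so the paper's
conclusion `c(n+1) = p−1`, with `c(i) = min(e(i)+f(i), p−1)`, reads
`min (e m + f m) (p−1) = p−1`.  The hypotheses `h0`, `hs` state that `(e, f)` is
the admissible pair of the monomial `ν` of `B`. -/
theorem stmt_4 (p : ℕ) (hp : p.Prime) (hodd : Odd p)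
    (ν : ℕ →₀ ℕ) (hν : p ∣ ν 0)
    (m : ℕ) (hm : p * (p - 1) ≤ ν m)
    (e f : ℕ →₀ ℕ) (hadm : ∀ i, e i ≤ p - 1)
    (h0 : ν 0 = p * f 0) (hs : ∀ j, ν (j + 1) = e j + p * f (j + 1)) :
    min (e m + f m) (p - 1) = p - 1 := by
  have hp0 : 0 < p := hp.pos
  suffices hf : p - 1 ≤ f m from min_eq_right (hf.trans (Nat.le_add_left _ _))
  cases m with
  | zero =>
    rw [h0] at hm
    exact Nat.le_of_mul_le_mul_left hm hp0
  | succ j =>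
    -- Since `e j < p`, the bound on `ν (j + 1)` gives `p * (p - 1) < p * (f (j + 1) + 1)`.
    have he := hadm j
    rw [hs] at hm
    have hlt : p * (p - 1) < p * (f (j + 1) + 1) := by
      rw [Nat.mul_succ]
      omega
    exact Nat.lt_succ_iff.mp (Nat.lt_of_mul_lt_mul_left hlt)
end

section
/- For every monomial x as above: u′(x) ≡ 2ε (mod 4). Hence u′(x) ≡ 0 (mod 4) if and only if x ∈ W₊, in which case s(x) ≡ −u′(x) (mod 9); and u′(x) ≡ 2 (mod 4) if and only if x ∈ W₋, in which case s(x) ≡ 7 − u′(x) (mod 9). -/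
/-!
For `n ≥ 2` the degree `2(3ⁿ - 5)` of `w_n` is divisible by `4`, as `3ⁿ - 5` is even, and is
congruent to `-10 ≡ -1` modulo `9`, as `9 ∣ 3ⁿ`. Summing over the factors `w_n` gives
`u' ≡ -2ε ≡ 2ε (mod 4)` and `u' + s ≡ -2ε (mod 9)`, and every claim follows from these two
congruences.
-/

theorem four_dvd_degree (n : ℕ) : (4 : ℤ) ∣ 2 * (3 ^ n - 5) := by
  have h : Odd ((3 : ℤ) ^ n) := Odd.pow (by decide)
  obtain ⟨k, hk⟩ := h
  exact ⟨k - 2, by rw [hk]; ring⟩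

theorem nine_dvd_degree_add_one {n : ℕ} (hn : 2 ≤ n) : (9 : ℤ) ∣ 2 * (3 ^ n - 5) + 1 := by
  obtain ⟨k, rfl⟩ := Nat.exists_eq_add_of_le hn
  exact ⟨2 * 3 ^ k - 1, by ring⟩

/-- paper's Lemma 2.2, "s-possibilities".
A monomial `x = b₁₀^N · h₁₀^ε · ∏_{n≥2} w_n^{m n}` of the `E₂`-page has
`s(x) = Σ_n m n` and `u′(x) = −2ε + Σ_n m n · 2(3ⁿ−5)`; the exponent function `m`
is supported on `[2, M)`.  Then `u′ ≡ 2ε (mod 4)`; `u′ ≡ 0 (mod 4)` iff `ε = 0`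
(i.e. `x ∈ W₊`), in which case `s ≡ −u′ (mod 9)`; and `u′ ≡ 2 (mod 4)` iff `ε = 1`
(i.e. `x ∈ W₋`), in which case `s ≡ 7 − u′ (mod 9)`. -/
theorem stmt_5 (N : ℤ) (ε : ℕ) (hε : ε ≤ 1)
    (m : ℕ → ℕ) (M : ℕ) (hm0 : m 0 = 0) (hm1 : m 1 = 0)
    (hsupp : ∀ n, M ≤ n → m n = 0)
    (s u' : ℤ)
    (hs : s = ∑ n ∈ Finset.range M, (m n : ℤ))
    (hu' : u' = -2 * (ε : ℤ) + ∑ n ∈ Finset.range M, (m n : ℤ) * (2 * (3 ^ n - 5))) :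
    u' ≡ 2 * (ε : ℤ) [ZMOD 4] ∧
    (u' ≡ 0 [ZMOD 4] ↔ ε = 0) ∧ (ε = 0 → s ≡ -u' [ZMOD 9]) ∧
    (u' ≡ 2 [ZMOD 4] ↔ ε = 1) ∧ (ε = 1 → s ≡ 7 - u' [ZMOD 9]) := by
  have h4 : (4 : ℤ) ∣ ∑ n ∈ Finset.range M, (m n : ℤ) * (2 * (3 ^ n - 5)) :=
    Finset.dvd_sum fun n _ => (four_dvd_degree n).mul_left _
  have h9 : (9 : ℤ) ∣ ∑ n ∈ Finset.range M, (m n : ℤ) * (2 * (3 ^ n - 5)) + s := by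
    rw [hs, ← Finset.sum_add_distrib]
    refine Finset.dvd_sum fun n _ => ?_
    rw [← mul_add_one]
    match n with
    | 0 => simp [hm0]
    | 1 => simp [hm1]
    | k + 2 => exact (nine_dvd_degree_add_one (by omega)).mul_left _
  generalize (∑ n ∈ Finset.range M, (m n : ℤ) * (2 * (3 ^ n - 5))) = S at *
  clear hs
  simp only [Int.ModEq]
  refine ⟨?_, ⟨?_, ?_⟩, ?_, ⟨?_, ?_⟩, ?_⟩ <;> omega
end

section
/- Let r ≥ 2 be an integer and let x, y be monomials as above satisfying the degree relation of a d_r-differential: s(y) = s(x) + r, t(y) = t(x) − r + 1, and u′(y) = u′(x) − 6. Then ε(y) = 1 − ε(x); moreover if x ∈ W₊ (i.e. ε(x) = 0) then y ∈ W₋ and r ≡ 4 (mod 9), while if x ∈ W₋ (i.e. ε(x) = 1) then y ∈ W₊ and r ≡ 8 (mod 9). In particular r ≡ 4 or 8 (mod 9). -/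
/-!
The relation on `t`, combined with the one on `s`, gives `ε₂ ≡ ε₁ + 1 (mod 2)`, so exactly one of
`ε₁, ε₂` is `1`. Every `w_n` with `n ≥ 2` has `u′`-degree `2(3ⁿ - 5) ≡ -10 ≡ -1 (mod 9)`, so
`u′ ≡ -2ε - s (mod 9)`; the relations on `s` and `u′` then give `r ≡ 6 + 2ε₁ - 2ε₂ (mod 9)`,
which is `4` for `ε₁ = 0` and `8` for `ε₁ = 1`.
-/

/-- Modulo `9` the `w`-part of `u′` is minus the number of factors `w_n`, counted with
multiplicity. -/
theorem nine_dvd_sum_add_sum (m : ℕ → ℕ) (M : ℕ) (h0 : m 0 = 0) (h1 : m 1 = 0) :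
    (9 : ℤ) ∣ (∑ n ∈ Finset.range M, (m n : ℤ) * (2 * (3 ^ n - 5)))
      + ∑ n ∈ Finset.range M, (m n : ℤ) := by
  rw [← Finset.sum_add_distrib]
  refine Finset.dvd_sum fun n _ => ?_
  match n with
  | 0 => simp [h0]
  | 1 => simp [h1]
  | k + 2 => exact ⟨(m (k + 2) : ℤ) * (2 * 3 ^ k - 1), by ring⟩

/-- degree-counting content of the paper's Proposition 2.3.
Monomials `x = b₁₀^{N₁} h₁₀^{ε₁} ∏ w_n^{m₁ n}` and `y = b₁₀^{N₂} h₁₀^{ε₂} ∏ w_n^{m₂ n}`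
with `s = Σ m`, `t = 2N + ε + Σ m`, `u′ = −2ε + Σ m n · 2(3ⁿ−5)`, related by the degree
relations of a `d_r`-differential: `s(y) = s(x) + r`, `t(y) = t(x) − r + 1`,
`u′(y) = u′(x) − 6`.  Then `ε(y) = 1 − ε(x)`; if `x ∈ W₊` then `y ∈ W₋` and
`r ≡ 4 (mod 9)`; if `x ∈ W₋` then `y ∈ W₊` and `r ≡ 8 (mod 9)`; in particular
`r ≡ 4` or `8 (mod 9)`. -/
theorem stmt_6 (r : ℕ) (hr : 2 ≤ r)
    (N₁ N₂ : ℤ) (ε₁ ε₂ : ℕ) (hε₁ : ε₁ ≤ 1) (hε₂ : ε₂ ≤ 1)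
    (m₁ m₂ : ℕ → ℕ) (M : ℕ)
    (hm₁0 : m₁ 0 = 0) (hm₁1 : m₁ 1 = 0) (hm₂0 : m₂ 0 = 0) (hm₂1 : m₂ 1 = 0)
    (hsupp₁ : ∀ n, M ≤ n → m₁ n = 0) (hsupp₂ : ∀ n, M ≤ n → m₂ n = 0)
    (hs : (∑ n ∈ Finset.range M, (m₂ n : ℤ)) = (∑ n ∈ Finset.range M, (m₁ n : ℤ)) + r)
    (ht : 2 * N₂ + (ε₂ : ℤ) + ∑ n ∈ Finset.range M, (m₂ n : ℤ)
        = 2 * N₁ + (ε₁ : ℤ) + (∑ n ∈ Finset.range M, (m₁ n : ℤ)) - r + 1)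
    (hu' : -2 * (ε₂ : ℤ) + ∑ n ∈ Finset.range M, (m₂ n : ℤ) * (2 * (3 ^ n - 5))
        = -2 * (ε₁ : ℤ) + (∑ n ∈ Finset.range M, (m₁ n : ℤ) * (2 * (3 ^ n - 5))) - 6) :
    ε₂ = 1 - ε₁ ∧
    (ε₁ = 0 → ε₂ = 1 ∧ r % 9 = 4) ∧
    (ε₁ = 1 → ε₂ = 0 ∧ r % 9 = 8) ∧
    (r % 9 = 4 ∨ r % 9 = 8) := by
  have h₁ := nine_dvd_sum_add_sum m₁ M hm₁0 hm₁1
  have h₂ := nine_dvd_sum_add_sum m₂ M hm₂0 hm₂1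
  -- Name the sums so that only linear arithmetic over `ℤ` remains.
  generalize (∑ n ∈ Finset.range M, (m₁ n : ℤ) * (2 * (3 ^ n - 5))) = U₁ at *
  generalize (∑ n ∈ Finset.range M, (m₂ n : ℤ) * (2 * (3 ^ n - 5))) = U₂ at *
  generalize (∑ n ∈ Finset.range M, (m₁ n : ℤ)) = S₁ at *
  generalize (∑ n ∈ Finset.range M, (m₂ n : ℤ)) = S₂ at *
  have hε : ε₂ = 1 - ε₁ := by omega
  obtain rfl | rfl : ε₁ = 0 ∨ ε₁ = 1 := by omega
  · have hr9 : r % 9 = 4 := by omega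
    omega
  · have hr9 : r % 9 = 8 := by omega
    omega
end

section
/- Let n ≥ 5 be a natural number and let k₁, k₂, k₃, k₄, k₅ be natural numbers with k_i ≥ 2 for every i and 3ⁿ + 18 = 3^{k₁} + 3^{k₂} + 3^{k₃} + 3^{k₄} + 3^{k₅}. Then, as multisets, {k₁, k₂, k₃, k₄, k₅} = {2, 2, n−1, n−1, n−1}; i.e. exactly two of the k_i equal 2 and the remaining three equal n−1. -/
/-!
Modulo `27` the equation says that the number of indices equal to `2` is `2` or `5`, because `3ⁿ` and
every `3^{kᵢ}` with `kᵢ ≥ 3` vanish; the value `5` is excluded by size. Cancelling the two terms `9`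
leaves three powers of `3` with sum `3ⁿ`, and `exponents_of_three_pow_sum` shows by descent that their
exponents are all `n - 1`.
-/

/-- Descent on `m`: modulo `3`, either all of `a`, `b`, `c` vanish, and then `m = 1`, or none does,
and the equation can be divided by `3`. -/
theorem exponents_of_three_pow_sum (m : ℕ) : ∀ a b c : ℕ, 3 ^ a + 3 ^ b + 3 ^ c = 3 ^ m →
    a + 1 = m ∧ b + 1 = m ∧ c + 1 = m := by
  induction m with
  | zero =>
    intro a b c h
    have := Nat.pow_pos (n := a) (show 0 < 3 by norm_num)
    have := Nat.pow_pos (n := b) (show 0 < 3 by norm_num)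
    have := Nat.pow_pos (n := c) (show 0 < 3 by norm_num)
    simp only [pow_zero] at h
    omega
  | succ m ih =>
    rintro (_ | a) (_ | b) (_ | c) h <;> simp only [pow_succ, pow_zero] at h
    · have hm : 3 ^ m = 3 ^ 0 := by omega
      have := Nat.pow_right_injective (by norm_num : 2 ≤ 3) hm
      omega
    all_goals first
      | omega
      | (have := ih a b c (by omega)
         omega)

theorem stmt_7 (n : ℕ) (hn : 5 ≤ n) (k : Fin 5 → ℕ) (hk : ∀ i, 2 ≤ k i)
    (h : 3 ^ n + 18 = ∑ i, 3 ^ k i) :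
    ({k 0, k 1, k 2, k 3, k 4} : Multiset ℕ) = {2, 2, n - 1, n - 1, n - 1} := by
  have split : ∀ i, (k i = 2 ∧ 3 ^ k i = 9) ∨ ∃ x, 3 ^ k i = 27 * x := by
    intro i
    rcases (hk i).eq_or_lt with h2 | h3
    · exact .inl ⟨h2.symm, by rw [← h2]; norm_num⟩
    · exact .inr (pow_dvd_pow 3 h3)
  obtain ⟨y, hy⟩ : 3 ^ 5 ∣ 3 ^ n := pow_dvd_pow 3 hn
  have hpos : 0 < 3 ^ n := by positivity
  have three : ∀ i j l, 3 ^ k i + 3 ^ k j + 3 ^ k l = 3 ^ n →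
      k i = n - 1 ∧ k j = n - 1 ∧ k l = n - 1 := by
    intro i j l e
    have := exponents_of_three_pow_sum n _ _ _ e
    omega
  simp only [Fin.sum_univ_five] at h
  -- Of the 32 patterns of indices equal to `2`, divisibility by `27` and size leave the ten with two.
  rcases split 0 with ⟨a0, e0⟩ | ⟨x0, e0⟩ <;> rcases split 1 with ⟨a1, e1⟩ | ⟨x1, e1⟩ <;>
  rcases split 2 with ⟨a2, e2⟩ | ⟨x2, e2⟩ <;> rcases split 3 with ⟨a3, e3⟩ | ⟨x3, e3⟩ <;>
  rcases split 4 with ⟨a4, e4⟩ | ⟨x4, e4⟩ <;> try omega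
  · have := three 2 3 4 (by omega)
    simp only [*, Multiset.insert_eq_cons, ← Multiset.singleton_add]
  · have := three 1 3 4 (by omega)
    simp only [*, Multiset.insert_eq_cons, ← Multiset.singleton_add]
    abel
  · have := three 1 2 4 (by omega)
    simp only [*, Multiset.insert_eq_cons, ← Multiset.singleton_add]
    abel
  · have := three 1 2 3 (by omega)
    simp only [*, Multiset.insert_eq_cons, ← Multiset.singleton_add]
    abel
  · have := three 0 3 4 (by omega)
    simp only [*, Multiset.insert_eq_cons, ← Multiset.singleton_add]
    abel
  · have := three 0 2 4 (by omega)
    simp only [*, Multiset.insert_eq_cons, ← Multiset.singleton_add]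
    abel
  · have := three 0 2 3 (by omega)
    simp only [*, Multiset.insert_eq_cons, ← Multiset.singleton_add]
    abel
  · have := three 0 1 4 (by omega)
    simp only [*, Multiset.insert_eq_cons, ← Multiset.singleton_add]
    abel
  · have := three 0 1 3 (by omega)
    simp only [*, Multiset.insert_eq_cons, ← Multiset.singleton_add]
    abel
  · have := three 0 1 2 (by omega)
    simp only [*, Multiset.insert_eq_cons, ← Multiset.singleton_add]
    abel
end

section
/- With the bidegrees listed in the context, the only monomials of total bidegree (u′, α) = (2(3ⁿ−8), 9) are b₁₀^N · h₁₀ · h₂₀ · h_{n−2,2} and b₁₀^N · h₁₀ · h₁₁ · h₂₀ · b_{n−2,1} for N ∈ ℤ. That is, any exponent assignment realizing this bidegree has all exponents zero except an arbitrary integer exponent on b₁₀ together with either exponent 1 on each of h₁₀, h₂₀, h_{n−2,2}, or exponent 1 on each of h₁₀, h₁₁, h₂₀ and exponent 1 on b_{n−2,1}. -/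
/-!
Write `X = 3^(n-2) ≥ 27`, so that every stem is linear in `X`. The grading `α` is the main
constraint: it rules out the generators with `α = 27`, and the two generators with `α = 3` are
exterior, so they contribute `0`, `3` or `6`; as the rest of the sum is a multiple of `9`, they are
absent. So exactly one of the five generators with `α = 9` occurs, to the first power. Half its
stem is `9X - c` with `c` one of `12, 6, 4, 15, 9`, which leaves the half-stem
`c - 8 ∈ {4, -2, -4, 7, 1}` for the generators with `α = 0`. Of these only `h₁₀` has negative
stem, namely `-1` after halving, whereas `b₁₁`, `b₂₀`, `h_{n-2,0}`, `b_{n-2,0}` have half-stem at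
least `12`; hence none of the latter occurs, and `-a10 + 3 * a11 + 5 * a20 = c - 8` is solvable
only for `c = 12` (`h₁₀h₂₀`) and `c = 15` (`h₁₀h₁₁h₂₀`).
-/

/-- The part with `α = 0`: a product of `h₁₀, h₁₁, h₂₀, h_{n-2,0}, b₁₁, b₂₀, b_{n-2,0}` of
half-stem at most `7` involves only `h₁₀, h₁₁, h₂₀`. Here `X` is `3^(n-2)`. -/
lemma only_small_generators {X r : ℤ} (hX : 27 ≤ X) (hr : r ≤ 7)
    {a10 a11 a20 an20 b11 b20 bn20 : ℕ} (ha10 : a10 ≤ 1)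
    (h : -(a10 : ℤ) + 3 * a11 + 5 * a20 + an20 * (X - 4) + 12 * b11 + 18 * b20
      + bn20 * (3 * X - 9) = r) :
    an20 = 0 ∧ b11 = 0 ∧ b20 = 0 ∧ bn20 = 0 := by
  have h1 : (an20 : ℤ) * 23 ≤ an20 * (X - 4) := by gcongr; omega
  have h2 : (bn20 : ℤ) * 72 ≤ bn20 * (3 * X - 9) := by gcongr; omega
  omega


/-- part (1) of the degree count in the paper's Proposition 5.13.
Exponents of a monomial in the `E₁`-page of the `b₁₀`-localized ISS for `P_n` (`n ≥ 5`):
`a10, a11, a20, an20, an21, an22, an10, an11, an0` are the exponents (each `≤ 1`) of the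
exterior generators `h₁₀, h₁₁, h₂₀, h_{n−2,0}, h_{n−2,1}, h_{n−2,2}, h_{n−1,0}, h_{n−1,1},
h_{n,0}`; `B10 : ℤ` is the exponent of `b₁₀^{±1}`; and `b11, b20, bn20, bn21, bn22, bn10,
bn11, bn0 : ℕ` are the exponents of `b₁₁, b₂₀, b_{n−2,0}, b_{n−2,1}, b_{n−2,2}, b_{n−1,0},
b_{n−1,1}, b_{n,0}`.  The hypotheses say the total bidegree is
`(u′, α) = (2(3ⁿ−8), 9)` with the bidegrees listed in the paper's table.
Conclusion: the monomial is `b₁₀^N·h₁₀·h₂₀·h_{n−2,2}` or `b₁₀^N·h₁₀·h₁₁·h₂₀·b_{n−2,1}`. -/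
theorem stmt_8 (n : ℕ) (hn : 5 ≤ n)
    (a10 a11 a20 an20 an21 an22 an10 an11 an0 : ℕ)
    (ha10 : a10 ≤ 1) (ha11 : a11 ≤ 1) (ha20 : a20 ≤ 1) (han20 : an20 ≤ 1)
    (han21 : an21 ≤ 1) (han22 : an22 ≤ 1) (han10 : an10 ≤ 1) (han11 : an11 ≤ 1)
    (han0 : an0 ≤ 1)
    (B10 : ℤ) (b11 b20 bn20 bn21 bn22 bn10 bn11 bn0 : ℕ)
    (hu' : (a10 : ℤ) * (-2) + (a11 : ℤ) * 6 + (a20 : ℤ) * 10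
        + (an20 : ℤ) * (2 * (3 ^ (n - 2) - 4)) + (an21 : ℤ) * (2 * (3 ^ (n - 1) - 6))
        + (an22 : ℤ) * (2 * (3 ^ n - 12)) + (an10 : ℤ) * (2 * (3 ^ (n - 1) - 4))
        + (an11 : ℤ) * (2 * (3 ^ n - 6)) + (an0 : ℤ) * (2 * (3 ^ n - 4))
        + B10 * 0 + (b11 : ℤ) * 24 + (b20 : ℤ) * 36
        + (bn20 : ℤ) * (2 * (3 ^ (n - 1) - 9)) + (bn21 : ℤ) * (2 * (3 ^ n - 15))
        + (bn22 : ℤ) * (2 * (3 ^ (n + 1) - 33)) + (bn10 : ℤ) * (2 * (3 ^ n - 9))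
        + (bn11 : ℤ) * (2 * (3 ^ (n + 1) - 15)) + (bn0 : ℤ) * (2 * (3 ^ (n + 1) - 9))
        = 2 * (3 ^ n - 8))
    (hα : 3 * an21 + 9 * an22 + 3 * an10 + 9 * an11 + 9 * an0
        + 9 * bn21 + 27 * bn22 + 9 * bn10 + 27 * bn11 + 27 * bn0 = 9) :
    (a10 = 1 ∧ a20 = 1 ∧ an22 = 1 ∧ a11 = 0 ∧ an20 = 0 ∧ an21 = 0 ∧ an10 = 0
      ∧ an11 = 0 ∧ an0 = 0 ∧ b11 = 0 ∧ b20 = 0 ∧ bn20 = 0 ∧ bn21 = 0 ∧ bn22 = 0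
      ∧ bn10 = 0 ∧ bn11 = 0 ∧ bn0 = 0) ∨
    (a10 = 1 ∧ a11 = 1 ∧ a20 = 1 ∧ bn21 = 1 ∧ an20 = 0 ∧ an21 = 0 ∧ an22 = 0
      ∧ an10 = 0 ∧ an11 = 0 ∧ an0 = 0 ∧ b11 = 0 ∧ b20 = 0 ∧ bn20 = 0 ∧ bn22 = 0
      ∧ bn10 = 0 ∧ bn11 = 0 ∧ bn0 = 0) := by
  obtain ⟨k, rfl⟩ : ∃ k, n = k + 2 := ⟨n - 2, by omega⟩
  have hX : (27 : ℤ) ≤ 3 ^ k := by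
    calc (27 : ℤ) = 3 ^ 3 := by norm_num
      _ ≤ 3 ^ k := pow_le_pow_right₀ (by norm_num) (by omega)
  have e1 : (3 : ℤ) ^ (k + 2 - 1) = 3 * 3 ^ k := by
    rw [show k + 2 - 1 = k + 1 by omega]; ring
  have e2 : (3 : ℤ) ^ (k + 2) = 9 * 3 ^ k := by ring
  have e3 : (3 : ℤ) ^ (k + 2 + 1) = 27 * 3 ^ k := by ring
  rw [Nat.add_sub_cancel, e1, e2, e3] at hu'
  generalize (3 : ℤ) ^ k = X at hX hu'
  obtain ⟨rfl, rfl, rfl, rfl, rfl⟩ :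
      bn22 = 0 ∧ bn11 = 0 ∧ bn0 = 0 ∧ an21 = 0 ∧ an10 = 0 := by omega
  have hone : an22 + an11 + an0 + bn21 + bn10 = 1 := by omega
  have hone' : (an22 : ℤ) + an11 + an0 + bn21 + bn10 = 1 := by exact_mod_cast hone
  have key : -(a10 : ℤ) + 3 * a11 + 5 * a20 + an20 * (X - 4) + 12 * b11 + 18 * b20
      + bn20 * (3 * X - 9)
      = 12 * an22 + 6 * an11 + 4 * an0 + 15 * bn21 + 9 * bn10 - 8 := by
    push_cast at hu'
    refine mul_left_cancel₀ (two_ne_zero' ℤ) ?_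
    linear_combination hu' - 18 * X * hone'
  obtain ⟨rfl, rfl, rfl, rfl⟩ := only_small_generators hX (by omega) ha10 key
  simp only [Nat.cast_zero, zero_mul, mul_zero, add_zero] at key
  interval_cases an11 <;> interval_cases an0 <;> interval_cases a20 <;> omega
end

section
/- If a monomial as in the context has total α-degree 9, total internal degree u = 2(3ⁿ+1), and total u − 6(s+t) = 2(3ⁿ−5), then it is exactly the single generator w_n: the exponent of w_n is 1 and all other exponents, including the exponent of b₁₀, are zero. -/
/-!
Every generator has `u - 6 (s + t) ≥ 0`, except `h₁₀` with `-2`, and `b₁₀` has exactly `0`.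
Comparing `u` with `u - 6 (s + t)` gives `s + t = 2`, whose parity forces `c = h`; so a factor `h₁₀`
always comes with a factor `h_{n-2,0}`, and with `M = 3 ^ (n - 2) ≥ 27` the pair contributes
`2 M - 10 > 0`. The `α`-degree leaves `w_n` or `w_{n-1} ^ 3`. In the first case the other factors
contribute `0` in total, hence are trivial, and `s + t = 2` kills the power of `b₁₀`. In the second
they would contribute `20`; `h_{n-2,0} h₁₀` and `b_{n-2,0}` are too large for that, and
`8 a + 36 b = 20` has no solution in natural numbers.
-/

/-- degree count underlying the paper's Proposition 5.12.
Exponents of a monomial on the generators `w₂, b₂₀, h_{n−2,0}, b_{n−2,0}, w_{n−1}, w_n,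
h₁₀, b₁₀` (with degrees `(s,t,u,α)` as in the paper's table) are
`a, b, c, d, e, g, h : ℕ` and `Nb : ℤ` (for `b₁₀`), with the exterior generators
`h_{n−2,0}` and `h₁₀` having exponent at most `1`.  If the total `α`-degree is `9`,
the total internal degree is `u = 2(3ⁿ+1)`, and `u − 6(s+t) = 2(3ⁿ−5)`, then the
monomial is exactly `w_n`. -/
theorem stmt_9 (n : ℕ) (hn : 5 ≤ n)
    (a b c d e g h : ℕ) (Nb : ℤ) (hc : c ≤ 1) (hh : h ≤ 1)
    (s t u : ℤ)
    (hs : s = (a : ℤ) + b + c + 2 * d + e + g)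
    (ht : t = (a : ℤ) + b + e + g + h + 2 * Nb)
    (hu : u = 20 * (a : ℤ) + 48 * b + 2 * (3 ^ (n - 2) - 1) * c
        + 2 * (3 ^ (n - 1) - 3) * d + 2 * (3 ^ (n - 1) + 1) * e
        + 2 * (3 ^ n + 1) * g + 4 * h + 12 * Nb)
    (hα : 3 * e + 9 * g = 9)
    (hu2 : u = 2 * (3 ^ n + 1))
    (hu' : u - 6 * (s + t) = 2 * (3 ^ n - 5)) :
    g = 1 ∧ a = 0 ∧ b = 0 ∧ c = 0 ∧ d = 0 ∧ e = 0 ∧ h = 0 ∧ Nb = 0 := by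
  obtain ⟨m, rfl⟩ : ∃ m, n = m + 2 := ⟨n - 2, by omega⟩
  rw [show m + 2 - 2 = m by omega, show m + 2 - 1 = m + 1 by omega] at hu
  simp only [pow_succ] at hu hu2 hu'
  have hM : (27 : ℤ) ≤ 3 ^ m := by
    calc (27 : ℤ) = 3 ^ 3 := by norm_num
      _ ≤ 3 ^ m := pow_le_pow_right₀ (by norm_num) (by omega)
  generalize (3 : ℤ) ^ m = M at *
  have hst : s + t = 2 := by linarith
  -- All terms of `s + t` other than `c + h` are even.
  have hch : c = h := by omega
  subst hch
  have hd : d = 0 := by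
    by_contra hd
    have hd1 : (1 : ℤ) ≤ d := by omega
    -- Already one factor `b_{n-2,0}` contributes more than `20`.
    have hMd : 6 * M - 18 ≤ (6 * M - 18) * d := by nlinarith
    have hc0 : (0 : ℤ) ≤ (2 * M - 10) * c :=
      mul_nonneg (by linarith) (Int.natCast_nonneg c)
    obtain ⟨rfl, rfl⟩ | ⟨rfl, rfl⟩ : (e = 0 ∧ g = 1) ∨ (e = 3 ∧ g = 0) := by omega
    all_goals
      push_cast at hs ht hu
      nlinarith
  subst hd
  obtain ⟨rfl, rfl⟩ | ⟨rfl, rfl⟩ : (e = 0 ∧ g = 1) ∨ (e = 3 ∧ g = 0) := by omega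
  all_goals
    obtain rfl | rfl : c = 0 ∨ c = 1 := by omega
    all_goals
      push_cast at hs ht hu
      omega
end

section
/- Let ν be a monomial of B such that ν(k) ≡ p−1 (mod p) for some k ≥ 2. Then the ∂-stable subspace T(ν) ⊆ B, regarded as a module over 𝔽_p[∂]/(∂^p) via the action of the derivation ∂, is a free 𝔽_p[∂]/(∂^p)-module. -/
open MvPolynomial

/-!
Since `∂ξ_i` is `1` or the `p`-th power `ξ_{i-1}^p`, it is killed by `∂`, so
`∂^j(ξ_i^n) = n(n-1)⋯(n-j+1) ξ_i^{n-j} (∂ξ_i)^j`. Hence the generator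
`gen k = ∏ ∂^{k(i)}(ξ_i^{ν(i)})` is zero unless `k(i) ≤ e(i) := ν(i) % p` for all `i` in the
support of `ν`, and the remaining generators, with `k` supported there, are nonzero multiples of distinct monomials; they form a basis of `T(ν)`
(`linearIndependent_gen`, `span_gen_digit`). In other words `T(ν)` is a tensor product of Jordan
blocks of sizes `e(i) + 1`, and one of them, for the index `m`, is free of size `p`.

The free generators are the `gen k` with `k(m) = 0`. By the Leibniz rule, `∂^j (gen k)` is
`gen (k + j δ_m)` plus generators with smaller `m`-th entry (`D_pow_gen_sub_mem`), so
induction on the `m`-th entry shows that the elements `∂^j (gen k)` with `k(m) = 0` and `j < p`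
span `T(ν)` (`gen_mem_span`). Because `e(m) = p - 1`, there are exactly as many of them as there
are basis monomials (`card_eq`), so they are linearly independent.
-/

section helpers

/-! ### The action of `∂` on the generators -/

variable {p : ℕ} (D : Derivation (ZMod p) (MvPolynomial ℕ (ZMod p)) (MvPolynomial ℕ (ZMod p)))

lemma derivation_prod (s : Finset ℕ) (f : ℕ → MvPolynomial ℕ (ZMod p)) :
    D (∏ i ∈ s, f i) = ∑ i ∈ s, ∏ j ∈ s, if j = i then D (f j) else f j := by
  induction s using Finset.induction_on with
  | empty => simp
  | insert a s ha ih =>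
    rw [Finset.prod_insert ha, D.leibniz, ih, Finset.sum_insert ha, Finset.prod_insert ha,
      add_comm, smul_eq_mul, smul_eq_mul, Finset.mul_sum]
    congr 1
    · rw [if_pos rfl, mul_comm]
      congr 1
      refine Finset.prod_congr rfl fun j hj => ?_
      rw [if_neg (by rintro rfl; exact ha hj)]
    · refine Finset.sum_congr rfl fun i hi => ?_
      rw [Finset.prod_insert ha, if_neg (by rintro rfl; exact ha hi)]

/-- The generator `∏ ∂^{k(i)}(ξ_i^{ν(i)})` of `T(ν)`, with the product taken over the fixed set
`ν.support`, so that the values of `k` outside `ν.support` are ignored. -/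
noncomputable def gen (ν k : ℕ →₀ ℕ) : MvPolynomial ℕ (ZMod p) :=
  ∏ i ∈ ν.support, (D.toLinearMap ^ k i) (X i ^ ν i)

lemma D_gen (ν k : ℕ →₀ ℕ) :
    D (gen D ν k) = ∑ i ∈ ν.support, gen D ν (k + Finsupp.single i 1) := by
  unfold gen
  rw [derivation_prod]
  refine Finset.sum_congr rfl fun i _ => Finset.prod_congr rfl fun j _ => ?_
  split_ifs with h
  · subst h
    simp [pow_succ', Module.End.mul_apply]
  · simp [Ne.symm h]

/-- Triangularity of `∂^j` with respect to the grading by `k(m)`: the Leibniz rule gives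
`∂^j (gen k) = gen (k + j δ_m)` up to generators in which the `m`-th factor has been
differentiated fewer than `k(m) + j` times. -/
lemma D_pow_gen_sub_mem (ν : ℕ →₀ ℕ) {m : ℕ} (hm : m ∈ ν.support) (k : ℕ →₀ ℕ) (j : ℕ) :
    (D.toLinearMap ^ j) (gen D ν k) - gen D ν (k + Finsupp.single m j) ∈
      Submodule.span (ZMod p) (gen D ν '' {k' | k' m < k m + j}) := by
  induction j with
  | zero => simp
  | succ j ih =>
    have h1 : D ((D.toLinearMap ^ j) (gen D ν k) - gen D ν (k + Finsupp.single m j)) ∈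
        Submodule.span (ZMod p) (gen D ν '' {k' | k' m < k m + (j + 1)}) := by
      generalize (D.toLinearMap ^ j) (gen D ν k) - gen D ν (k + Finsupp.single m j) = y at ih
      induction ih using Submodule.span_induction with
      | mem x hx =>
        obtain ⟨k', hk', rfl⟩ := hx
        rw [D_gen]
        refine Submodule.sum_mem _ fun i _ => Submodule.subset_span ⟨_, ?_, rfl⟩
        simp only [Set.mem_ofPred_eq, Finsupp.add_apply, Finsupp.single_apply] at hk' ⊢
        split_ifs <;> omega
      | zero => simp
      | add x y _ _ hx hy => rw [map_add]; exact add_mem hx hy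
      | smul c x _ hx => rw [D.map_smul]; exact Submodule.smul_mem _ c hx
    have h2 : D (gen D ν (k + Finsupp.single m j)) - gen D ν (k + Finsupp.single m (j + 1)) ∈
        Submodule.span (ZMod p) (gen D ν '' {k' | k' m < k m + (j + 1)}) := by
      rw [D_gen, ← Finset.add_sum_erase _ _ hm, add_assoc k, ← Finsupp.single_add,
        add_sub_cancel_left]
      refine Submodule.sum_mem _ fun i hi => Submodule.subset_span ⟨_, ?_, rfl⟩
      have := Finset.ne_of_mem_erase hi
      simp [this]
    have h3 := add_mem h1 h2
    rw [map_sub, sub_add_sub_cancel] at h3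
    rwa [pow_succ', Module.End.mul_apply]

lemma gen_filter (ν k : ℕ →₀ ℕ) : gen D ν (k.filter (· ∈ ν.support)) = gen D ν k := by
  unfold gen
  exact Finset.prod_congr rfl fun i hi => by rw [Finsupp.filter_apply_pos _ _ hi]

/-! ### Explicit form of the generators -/

/-- The exponent of the monomial `∂ ξ_i`. -/
noncomputable def dExp (p : ℕ) : ℕ → ℕ →₀ ℕ
  | 0 => 0
  | i + 1 => Finsupp.single i p

lemma dvd_dExp (i a : ℕ) : p ∣ dExp p i a := by
  cases i with
  | zero => simp [dExp]
  | succ i => simp only [dExp, Finsupp.single_apply]; split_ifs <;> simp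

variable {D} (hD1 : D (X 0) = 1) (hDn : ∀ i : ℕ, D (X (i + 1)) = X i ^ p)
include hD1 hDn

lemma D_X_eq (i : ℕ) : D (X i) = monomial (dExp p i) 1 := by
  cases i with
  | zero => rw [hD1]; rfl
  | succ i => rw [hDn, X_pow_eq_monomial]; rfl

lemma D_D_X (i : ℕ) : D (D (X i)) = 0 := by
  cases i with
  | zero => rw [hD1, D.map_one_eq_zero]
  | succ i => rw [hDn, D.leibniz_pow]; simp

lemma D_pow_X_pow (i n j : ℕ) :
    (D.toLinearMap ^ j) (X i ^ n) =
      monomial (Finsupp.single i (n - j) + j • dExp p i) (n.descFactorial j : ZMod p) := by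
  have key : (D.toLinearMap ^ j) (X i ^ n) =
      (n.descFactorial j : ZMod p) • (X i ^ (n - j) * D (X i) ^ j) := by
    induction j with
    | zero => simp
    | succ j ih =>
      rw [pow_succ', Module.End.mul_apply, ih]
      change D _ = _
      rw [D.map_smul, D.leibniz, D.leibniz_pow, D.leibniz_pow, D_D_X hD1 hDn, Nat.descFactorial_succ,
        mul_comm, Nat.cast_mul, mul_smul, Nat.cast_smul_eq_nsmul (ZMod p) (n - j)]
      congr 1
      simp only [smul_eq_mul, nsmul_eq_mul, smul_zero, mul_zero, zero_add, Nat.sub_sub]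
      ring
  rw [key, D_X_eq hD1 hDn, X_pow_eq_monomial, monomial_pow, monomial_mul, smul_monomial]
  simp

omit hD1 hDn in
/-- The falling factorial `n (n-1) ⋯ (n-j+1)` vanishes mod `p` once `j` exceeds the last `p`-adic
digit of `n`. -/
lemma descFactorial_cast_eq_zero {n j : ℕ} (h : n % p < j) :
    (n.descFactorial j : ZMod p) = 0 := by
  rw [ZMod.natCast_eq_zero_iff, Nat.descFactorial_eq_prod_range]
  exact (Nat.dvd_sub_mod n).trans (Finset.dvd_prod_of_mem _ (Finset.mem_range.2 h))

omit hD1 hDn in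
lemma descFactorial_cast_ne_zero (hp : p.Prime) {n j : ℕ} (h : j ≤ n % p) :
    (n.descFactorial j : ZMod p) ≠ 0 := by
  rw [Ne, ZMod.natCast_eq_zero_iff, Nat.descFactorial_eq_prod_range, hp.prime.dvd_finsetProd_iff]
  rintro ⟨a, ha, hd⟩
  rw [Finset.mem_range] at ha
  have hn := Nat.mod_add_div n p
  have hlt := Nat.mod_lt n hp.pos
  have : n - a = (n % p - a) + p * (n / p) := by omega
  rw [this, Nat.dvd_add_left (dvd_mul_right _ _)] at hd
  have := Nat.le_of_dvd (by omega) hd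
  omega

lemma gen_eq_zero {ν k : ℕ →₀ ℕ} {i : ℕ} (hi : i ∈ ν.support) (h : ν i % p < k i) :
    gen D ν k = 0 := by
  refine Finset.prod_eq_zero hi ?_
  rw [D_pow_X_pow hD1 hDn, descFactorial_cast_eq_zero h, monomial_zero]

/-- The last `p`-adic digits of the exponents of `ν`, i.e. the largest `k` supported on `ν.support`
with `gen k ≠ 0`. -/
noncomputable def digit (p : ℕ) (ν : ℕ →₀ ℕ) : ℕ →₀ ℕ := ν.mapRange (· % p) (Nat.zero_mod p)

omit hD1 hDn in
lemma le_digit_iff {ν k : ℕ →₀ ℕ} : k ≤ digit p ν ↔ ∀ i, k i ≤ ν i % p := by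
  simp [digit, Finsupp.le_def]

/-- The generators with `k ≤ digit p ν` are nonzero multiples of distinct monomials: the exponent
of `ξ_i` is congruent to `ν(i) - k(i)` mod `p`, which determines `k(i) ≤ ν(i) % p < p`. -/
lemma linearIndependent_gen (hp : p.Prime) (ν : ℕ →₀ ℕ) :
    LinearIndependent (ZMod p) (fun k : {k // k ≤ digit p ν} => gen D ν k) := by
  have := Fact.mk hp
  let ex : {k // k ≤ digit p ν} → ℕ →₀ ℕ := fun k =>
    ∑ i ∈ ν.support, (Finsupp.single i (ν i - k.1 i) + k.1 i • dExp p i)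
  let c : {k // k ≤ digit p ν} → (ZMod p)ˣ := fun k =>
    ∏ i ∈ ν.support, Units.mk0 ((ν i).descFactorial (k.1 i) : ZMod p)
      (descFactorial_cast_ne_zero hp (le_digit_iff.1 k.2 i))
  have hmod : ∀ k i, ex k i ≡ ν i - k.1 i [MOD p] := by
    intro k i
    have hd : p ∣ ∑ a ∈ ν.support, k.1 a * dExp p a i :=
      Finset.dvd_sum fun a _ => (dvd_dExp a i).mul_left _
    have he : ex k i = (ν i - k.1 i) + ∑ a ∈ ν.support, k.1 a * dExp p a i := by
      simp only [ex, Finsupp.finsetSum_apply, Finsupp.add_apply, Finset.sum_add_distrib,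
        Finsupp.smul_apply, smul_eq_mul, Finsupp.single_apply, Finset.sum_ite_eq']
      split_ifs with h
      · rfl
      · rw [Finsupp.notMem_support_iff.1 h]; simp
    rw [he]
    exact (Nat.modEq_iff_dvd' (Nat.le_add_right _ _)).2 (by simpa using hd) |>.symm
  have hinj : Function.Injective ex := by
    intro k k' h
    refine Subtype.ext (Finsupp.ext fun i => ?_)
    have h1 : ν i - k.1 i ≡ ν i - k'.1 i [MOD p] := (hmod k i).symm.trans (h ▸ hmod k' i)
    have hk := le_digit_iff.1 k.2 i
    have hk' := le_digit_iff.1 k'.2 i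
    have hlt := Nat.mod_lt (ν i) hp.pos
    have hle := Nat.mod_le (ν i) p
    have red : ∀ a, a ≤ ν i % p → (ν i - a) % p = ν i % p - a := by
      intro a ha
      have hn := Nat.mod_add_div (ν i) p
      have : ν i - a = (ν i % p - a) + p * (ν i / p) := by omega
      rw [this, Nat.add_mul_mod_self_left, Nat.mod_eq_of_lt (by omega)]
    rw [Nat.ModEq, red _ hk, red _ hk'] at h1
    omega
  have := (((basisMonomials ℕ (ZMod p)).linearIndependent.comp ex hinj).units_smul c)
  have hfun : (fun k : {k // k ≤ digit p ν} => gen D ν k) =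
      c • (basisMonomials ℕ (ZMod p) ∘ ex) := by
    funext k
    simp only [gen, D_pow_X_pow hD1 hDn, Pi.smul_apply', Function.comp_apply,
      coe_basisMonomials, ex, c, Units.smul_def, smul_monomial, Units.coe_prod, Units.val_mk0,
      smul_eq_mul, mul_one, monomial_sum_prod]
  rw [hfun]
  exact this

/-! ### Spanning sets of `T(ν)` and the dimension count -/

omit hD1 hDn in
lemma span_eq_span_gen (ν : ℕ →₀ ℕ) :
    Submodule.span (ZMod p) {x | ∃ k : ℕ →₀ ℕ,
        x = ∏ i ∈ ν.support ∪ k.support, (D.toLinearMap ^ k i) (X i ^ ν i)} =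
      Submodule.span (ZMod p) (Set.range (gen D ν)) := by
  apply le_antisymm <;> rw [Submodule.span_le]
  · rintro _ ⟨k, rfl⟩
    by_cases h : k.support ⊆ ν.support
    · rw [Finset.union_eq_left.2 h]
      exact Submodule.subset_span ⟨k, rfl⟩
    · obtain ⟨i, hik, hiν⟩ := Finset.not_subset.1 h
      rw [Finset.prod_eq_zero (Finset.mem_union_right _ hik)]
      · exact zero_mem _
      · obtain ⟨n, hn⟩ := Nat.exists_eq_succ_of_ne_zero (Finsupp.mem_support_iff.1 hik)
        rw [Finsupp.notMem_support_iff.1 hiν, hn, pow_succ]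
        simp
  · rintro _ ⟨k, rfl⟩
    refine Submodule.subset_span ⟨k.filter (· ∈ ν.support), ?_⟩
    rw [Finset.union_eq_left.2, ← gen_filter]
    · rfl
    · intro i; simp

/-- `gen k` vanishes unless `k ≤ digit p ν` on `ν.support`, and outside `ν.support` one may take
`k = 0`. -/
lemma span_gen_digit (ν : ℕ →₀ ℕ) :
    Submodule.span (ZMod p) (Set.range fun k : {k // k ≤ digit p ν} => gen D ν k) =
      Submodule.span (ZMod p) (Set.range (gen D ν)) := by
  apply le_antisymm <;> rw [Submodule.span_le]
  · rintro _ ⟨k, rfl⟩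
    exact Submodule.subset_span ⟨k, rfl⟩
  · rintro _ ⟨k, rfl⟩
    by_cases h : k.filter (· ∈ ν.support) ≤ digit p ν
    · exact Submodule.subset_span ⟨⟨_, h⟩, gen_filter D ν k⟩
    · rw [le_digit_iff] at h
      push Not at h
      obtain ⟨i, hi⟩ := h
      by_cases hs : i ∈ ν.support
      · rw [Finsupp.filter_apply_pos _ _ hs] at hi
        rw [gen_eq_zero hD1 hDn hs hi]
        exact zero_mem _
      · rw [Finsupp.filter_apply_neg _ _ hs] at hi
        omega

omit hD1 hDn in
lemma D_pow_gen_mem (ν k : ℕ →₀ ℕ) (j : ℕ) :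
    (D.toLinearMap ^ j) (gen D ν k) ∈ Submodule.span (ZMod p) (Set.range (gen D ν)) := by
  induction j generalizing k with
  | zero => exact Submodule.subset_span ⟨k, rfl⟩
  | succ j ih =>
    rw [pow_succ, Module.End.mul_apply]
    change (D.toLinearMap ^ j) (D (gen D ν k)) ∈ _
    rw [D_gen, map_sum]
    exact Submodule.sum_mem _ fun i _ => ih _

/-- Triangularity and induction on `k(m)` recover every generator from the `∂^j (gen k)` with
`k(m) = 0`; only `j < p` is needed because `k(m) ≤ ν(m) % p`. -/
lemma gen_mem_span (hp : p.Prime) (ν : ℕ →₀ ℕ) {m : ℕ} (hm : m ∈ ν.support) (n : ℕ) :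
    ∀ k : ℕ →₀ ℕ, k m = n → gen D ν k ∈ Submodule.span (ZMod p)
      (Set.range fun ij : {k // k ≤ digit p ν ∧ k m = 0} × Fin p =>
        (D.toLinearMap ^ (ij.2 : ℕ)) (gen D ν ij.1)) := by
  induction n using Nat.strong_induction_on with
  | _ n ih =>
    intro k hk
    by_cases h : k.filter (· ∈ ν.support) ≤ digit p ν
    · set k₁ := k.filter (· ∈ ν.support) with hk₁
      have hk₁m : k₁ m = n := by rw [hk₁, Finsupp.filter_apply_pos _ _ hm, hk]
      have hn : n < p := hk₁m ▸ (le_digit_iff.1 h m).trans_lt (Nat.mod_lt _ hp.pos)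
      have hsum : k₁.erase m + Finsupp.single m n = k₁ := by
        rw [← hk₁m, Finsupp.erase_add_single]
      have hle : k₁.erase m ≤ digit p ν :=
        (le_self_add.trans hsum.le).trans h
      have h1 := D_pow_gen_sub_mem D ν hm (k₁.erase m) n
      rw [hsum, hk₁, gen_filter, ← hk₁] at h1
      have h2 : Submodule.span (ZMod p) (gen D ν '' {k' | k' m < k₁.erase m m + n}) ≤
          Submodule.span (ZMod p)
            (Set.range fun ij : {k // k ≤ digit p ν ∧ k m = 0} × Fin p =>
              (D.toLinearMap ^ (ij.2 : ℕ)) (gen D ν ij.1)) := by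
        rw [Submodule.span_le]
        rintro _ ⟨k', hk', rfl⟩
        exact ih _ (by simpa using hk') k' rfl
      refine (Submodule.sub_mem_iff_right _ (Submodule.subset_span ?_)).1 (h2 h1)
      exact ⟨(⟨k₁.erase m, hle, by simp⟩, ⟨n, hn⟩), rfl⟩
    · rw [le_digit_iff] at h
      push Not at h
      obtain ⟨i, hi⟩ := h
      by_cases hs : i ∈ ν.support
      · rw [Finsupp.filter_apply_pos _ _ hs] at hi
        rw [gen_eq_zero hD1 hDn hs hi]
        exact zero_mem _
      · rw [Finsupp.filter_apply_neg _ _ hs] at hi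
        omega

omit hD1 hDn in
/-- If the `m`-th digit of `ν` is `p - 1`, then `(k, j) ↦ k + j δ_m` is a bijection. -/
lemma card_eq (hp : p.Prime) (ν : ℕ →₀ ℕ) {m : ℕ} (hm : ν m % p = p - 1) :
    Nat.card ({k // k ≤ digit p ν ∧ k m = 0} × Fin p) = Nat.card {k // k ≤ digit p ν} := by
  refine Nat.card_congr
    { toFun := fun ij => ⟨ij.1.1 + Finsupp.single m (ij.2 : ℕ), ?_⟩
      invFun := fun k => (⟨k.1.erase m, ?_, by simp⟩, ⟨k.1 m, ?_⟩)
      left_inv := ?_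
      right_inv := ?_ }
  · rw [le_digit_iff]
    intro i
    have h1 := le_digit_iff.1 ij.1.2.1 i
    have h2 := ij.1.2.2
    have h3 := ij.2.2
    rw [Finsupp.add_apply, Finsupp.single_apply]
    split_ifs with h
    · subst h; omega
    · omega
  · exact le_self_add.trans ((Finsupp.erase_add_single m k.1).le.trans k.2)
  · exact (le_digit_iff.1 k.2 m).trans_lt (Nat.mod_lt _ hp.pos)
  · rintro ⟨⟨k, hk, hk0⟩, j⟩
    refine Prod.ext (Subtype.ext ?_) (Fin.ext ?_)
    · ext i
      by_cases h : i = m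
      · subst h; simp [hk0]
      · simp [Finsupp.erase_ne h]
    · simp [hk0]
  · intro k
    exact Subtype.ext (Finsupp.erase_add_single m k.1)

end helpers

/-- module-theoretic dual of the paper's Lemma 4.13, "T(X)-free-e".
Indexing convention: the variable `X i` denotes `ξ_{i+1}`, so the exponent function
`ν : ℕ →₀ ℕ` of a monomial of `B` has `ν i` = exponent of `ξ_{i+1}` (and `p ∣ ν(1)`
reads `p ∣ ν 0`; "`ν(k) ≡ p−1 (mod p)` for some `k ≥ 2`" reads
`∃ m, ν (m+1) % p = p − 1`).  `D` is the derivation `∂` and `T` is the span of all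
products `∏_i ∂^{k(i)}(ξ_i^{ν(i)})`, a `∂`-stable subspace.  The conclusion states
that `T` is free as an `𝔽_p[∂]/(∂^p)`-module: there is a family `v` of elements of
`T` such that the elements `∂^j (v i)` for `0 ≤ j < p` form an `𝔽_p`-basis of `T`. -/
theorem stmt_13 (p : ℕ) (hp : p.Prime) (hodd : Odd p)
    (D : Derivation (ZMod p) (MvPolynomial ℕ (ZMod p)) (MvPolynomial ℕ (ZMod p)))
    (hD1 : D (X 0) = 1)
    (hDn : ∀ i : ℕ, D (X (i + 1)) = X i ^ p)
    (ν : ℕ →₀ ℕ) (hν : p ∣ ν 0)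
    (hcong : ∃ m : ℕ, ν (m + 1) % p = p - 1)
    (T : Submodule (ZMod p) (MvPolynomial ℕ (ZMod p)))
    (hT : T = Submodule.span (ZMod p)
      {x | ∃ k : ℕ →₀ ℕ,
        x = ∏ i ∈ ν.support ∪ k.support, (D.toLinearMap ^ k i) (X i ^ ν i)}) :
    ∃ (ι : Type) (v : ι → MvPolynomial ℕ (ZMod p)),
      (∀ i, v i ∈ T) ∧
      LinearIndependent (ZMod p)
        (fun ij : ι × Fin p => (D.toLinearMap ^ (ij.2 : ℕ)) (v ij.1)) ∧
      Submodule.span (ZMod p)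
        (Set.range fun ij : ι × Fin p => (D.toLinearMap ^ (ij.2 : ℕ)) (v ij.1)) = T := by
  have := Fact.mk hp
  obtain ⟨m, hm⟩ := hcong
  have hsupp : m + 1 ∈ ν.support := by
    rw [Finsupp.mem_support_iff]
    intro h
    have := hp.two_le
    rw [h, Nat.zero_mod] at hm
    omega
  rw [span_eq_span_gen] at hT
  have hspan : Submodule.span (ZMod p)
      (Set.range fun ij : {k // k ≤ digit p ν ∧ k (m + 1) = 0} × Fin p =>
        (D.toLinearMap ^ (ij.2 : ℕ)) (gen D ν ij.1)) = T := by
    rw [hT]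
    apply le_antisymm <;> rw [Submodule.span_le]
    · rintro _ ⟨ij, rfl⟩
      exact D_pow_gen_mem ν _ _
    · rintro _ ⟨k, rfl⟩
      exact gen_mem_span hD1 hDn hp ν hsupp _ k rfl
  refine ⟨{k // k ≤ digit p ν ∧ k (m + 1) = 0}, fun k => gen D ν k, ?_, ?_, hspan⟩
  · intro k
    rw [hT]
    exact Submodule.subset_span ⟨k, rfl⟩
  · have : Finite {k // k ≤ digit p ν} := inferInstanceAs (Finite (Set.Iic (digit p ν)))
    have : Finite {k // k ≤ digit p ν ∧ k (m + 1) = 0} :=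
      Finite.of_injective (fun k => (⟨k.1, k.2.1⟩ : {k // k ≤ digit p ν}))
        fun a b h => Subtype.ext (Subtype.mk.inj h)
    have := Fintype.ofFinite {k // k ≤ digit p ν}
    have := Fintype.ofFinite {k // k ≤ digit p ν ∧ k (m + 1) = 0}
    -- A spanning family of cardinality `dim T` is linearly independent.
    have hli := linearIndependent_iff_card_eq_finrank_span.1 (linearIndependent_gen hD1 hDn hp ν)
    rw [linearIndependent_iff_card_eq_finrank_span, ← Nat.card_eq_fintype_card, card_eq hp ν hm,
      Nat.card_eq_fintype_card, hli, Set.finrank, Set.finrank, hspan, span_gen_digit hD1 hDn, hT]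
end

section
/- Let (e, f) be an admissible pair, let ν = ⟨e; f⟩ and ν₀ = ⟨e; 0⟩ be the corresponding monomials of B, and let u = ⟨0; f⟩ = ∏_{i≥2} ξ_{i−1}^{p·f(i)}. Then ∂(u) = 0, and multiplication by u restricts to a linear bijection T(ν₀) → T(ν) which commutes with ∂; in particular T(ν₀) and T(ν) are isomorphic as 𝔽_p[∂]/(∂^p)-modules. -/
open MvPolynomial

/-!
In characteristic `p` every `p`-th power is a constant for the derivation `D`, so multiplication by
a `p`-th power commutes with all powers of `D`. Since `ν = ν₀ + p • f`, each generator of `T`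
factors as
`∏ D^{k i} (X i ^ ν i) = ∏ (X i ^ f i) ^ p * D^{k i} (X i ^ ν₀ i) = u * ∏ D^{k i} (X i ^ ν₀ i)`,
that is, as `u` times the generator of `T₀` with the same `k` (`generator_eq_mul`). Hence `T` is the
image of `T₀` under multiplication by `u`, which is injective because the polynomial ring is a
domain.
-/

section

variable {p : ℕ} (D : Derivation (ZMod p) (MvPolynomial ℕ (ZMod p)) (MvPolynomial ℕ (ZMod p)))

lemma derivation_pow_char (g : MvPolynomial ℕ (ZMod p)) : D (g ^ p) = 0 := by
  simp [Derivation.leibniz_pow]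

lemma derivation_pow_char_mul (g x : MvPolynomial ℕ (ZMod p)) :
    D (g ^ p * x) = g ^ p * D x := by
  simp [Derivation.leibniz]

lemma derivation_iterate_pow_char_mul (g x : MvPolynomial ℕ (ZMod p)) (k : ℕ) :
    (D.toLinearMap ^ k) (g ^ p * x) = g ^ p * (D.toLinearMap ^ k) x := by
  induction k with
  | zero => simp
  | succ k ih =>
    rw [pow_succ', Module.End.mul_apply, Module.End.mul_apply, ih]
    exact derivation_pow_char_mul D g _

/-- The generators of `T` and `T₀` with the same `k` differ by the factor `u`. -/
lemma generator_eq_mul (hp : p.Prime) (ν ν₀ f k : ℕ →₀ ℕ) (h : ∀ i, ν i = ν₀ i + p * f i) :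
    ∏ i ∈ ν.support ∪ k.support, (D.toLinearMap ^ k i) (X i ^ ν i) =
      monomial (p • f) 1 *
        ∏ i ∈ ν₀.support ∪ k.support, (D.toLinearMap ^ k i) (X i ^ ν₀ i) := by
  have hfactor : ∀ i, (D.toLinearMap ^ k i) (X i ^ ν i) =
      (X i ^ f i) ^ p * (D.toLinearMap ^ k i) (X i ^ ν₀ i) := fun i => by
    rw [← derivation_iterate_pow_char_mul, h i]
    congr 1
    ring
  have hsub₀ : ν₀.support ∪ k.support ⊆ ν.support ∪ k.support := by
    refine Finset.union_subset_union_left fun i hi => ?_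
    have := h i
    simp only [Finsupp.mem_support_iff] at hi ⊢
    omega
  have hsubf : f.support ⊆ ν.support ∪ k.support := by
    refine fun i hi => Finset.mem_union_left _ ?_
    have := h i
    simp only [Finsupp.mem_support_iff] at hi ⊢
    have := Nat.mul_ne_zero hp.ne_zero hi
    omega
  rw [Finset.prod_congr rfl fun i _ => hfactor i, Finset.prod_mul_distrib]
  congr 1
  · rw [Finset.prod_pow, ← one_pow p, ← monomial_pow, monomial_eq, C_1, one_mul]
    congr 1
    exact (Finsupp.prod_of_support_subset f hsubf _ fun i _ => pow_zero _).symm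
  · refine (Finset.prod_subset hsub₀ fun i _ hi => ?_).symm
    simp only [Finset.mem_union, Finsupp.mem_support_iff, not_or, not_not] at hi
    simp [hi.1, hi.2]

end

/-- module-theoretic form of the paper's Lemma 4.12, "cancel-f".
Indexing convention: the variable `X i` denotes `ξ_{i+1}`; `e i`, `f i` denote the
paper's `e(i+2)`, `f(i+2)`.  `D` is the derivation `∂`.  The monomials `ν = ⟨e; f⟩`,
`ν₀ = ⟨e; 0⟩` are encoded by their exponent functions, and
`u = ⟨0; f⟩ = ∏_{i≥2} ξ_{i−1}^{p·f(i)}` is the monomial with exponent function `p • f`.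
`T`, `T₀` are the spans of all products `∏_i ∂^{k(i)}(ξ_i^{ν(i)})`
(resp. with `ν₀`).  Then `∂u = 0`, multiplication by `u` maps `T₀` into `T`
bijectively, and it commutes with `∂`; in particular `T₀ ≅ T` as
`𝔽_p[∂]/(∂^p)`-modules. -/
theorem stmt_14 (p : ℕ) (hp : p.Prime) (hodd : Odd p)
    (D : Derivation (ZMod p) (MvPolynomial ℕ (ZMod p)) (MvPolynomial ℕ (ZMod p)))
    (hD1 : D (X 0) = 1)
    (hDn : ∀ i : ℕ, D (X (i + 1)) = X i ^ p)
    (e f : ℕ →₀ ℕ) (hadm : ∀ i, e i ≤ p - 1)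
    (ν ν₀ : ℕ →₀ ℕ)
    (hν0 : ν 0 = p * f 0) (hνs : ∀ m, ν (m + 1) = e m + p * f (m + 1))
    (hν₀0 : ν₀ 0 = 0) (hν₀s : ∀ m, ν₀ (m + 1) = e m)
    (u : MvPolynomial ℕ (ZMod p)) (hu : u = MvPolynomial.monomial (p • f) 1)
    (T T₀ : Submodule (ZMod p) (MvPolynomial ℕ (ZMod p)))
    (hT : T = Submodule.span (ZMod p)
      {x | ∃ k : ℕ →₀ ℕ,
        x = ∏ i ∈ ν.support ∪ k.support, (D.toLinearMap ^ k i) (X i ^ ν i)})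
    (hT₀ : T₀ = Submodule.span (ZMod p)
      {x | ∃ k : ℕ →₀ ℕ,
        x = ∏ i ∈ ν₀.support ∪ k.support, (D.toLinearMap ^ k i) (X i ^ ν₀ i)}) :
    D u = 0 ∧
    (∀ x ∈ T₀, u * x ∈ T) ∧
    (∀ x ∈ T₀, ∀ y ∈ T₀, u * x = u * y → x = y) ∧
    (∀ z ∈ T, ∃ x ∈ T₀, u * x = z) ∧
    (∀ x : MvPolynomial ℕ (ZMod p), D (u * x) = u * D x) := by
  have : Fact p.Prime := ⟨hp⟩
  have hν : ∀ i, ν i = ν₀ i + p * f i := by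
    rintro (_ | m)
    · simp [hν0, hν₀0]
    · rw [hνs, hν₀s]
  have hup : u = monomial f 1 ^ p := by rw [hu, monomial_pow, one_pow]
  have hu0 : u ≠ 0 := by simp [hu]
  have hTmap : T = T₀.map (LinearMap.mulLeft (ZMod p) u) := by
    rw [hT, hT₀, Submodule.map_span]
    congr 1
    ext x
    constructor
    · rintro ⟨k, rfl⟩
      exact ⟨_, ⟨k, rfl⟩, by
        rw [generator_eq_mul D hp ν ν₀ f k hν, LinearMap.mulLeft_apply, hu]⟩
    · rintro ⟨_, ⟨k, rfl⟩, rfl⟩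
      exact ⟨k, by rw [generator_eq_mul D hp ν ν₀ f k hν, LinearMap.mulLeft_apply, hu]⟩
  refine ⟨?_, ?_, ?_, ?_, ?_⟩
  · rw [hup, derivation_pow_char]
  · intro x hx
    rw [hTmap]
    exact ⟨x, hx, rfl⟩
  · exact fun x _ y _ hxy => mul_left_cancel₀ hu0 hxy
  · intro z hz
    rw [hTmap] at hz
    exact hz
  · intro x
    rw [hup, derivation_pow_char_mul]
end

section
/- Let k = 𝔽₃, A = k[t]/(t³), and let Q = k[y, z]/(y³, z³). Let δ be the k-linear derivation of Q with δ(y) = z and δ(z) = 0; then δ³ = 0, so Q becomes an A-module with t acting as δ. As A-modules, Q ≅ A ⊕ (A/(t²))² ⊕ (A/(t))²; equivalently, the nilpotent operator δ on the 9-dimensional space Q has Jordan type (3, 2, 2, 1, 1). -/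
set_option synthInstance.maxHeartbeats 1000000
set_option maxHeartbeats 1000000

open MvPolynomial

/-!
The ring `Q = k[y,z]/(y³,z³)` has the monomials `yᵃzᵇ`, `a, b < 3`, as a `k`-basis, and
`δ (yᵃzᵇ) = a yᵃ⁻¹zᵇ⁺¹` preserves the total degree. Hence `Q` splits by degree into the chains
`1 ↦ 0`, `y ↦ z ↦ 0`, `y² ↦ 2yz ↦ 2z² ↦ 0`, `y²z ↦ 2yz² ↦ 0` and `y²z² ↦ 0`, which have lengths
`1, 2, 3, 2, 1`. As `2` is a unit in `𝔽₃`, the members of the chains are the monomial basis up to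
units. Spanning is `span_chains`; linear independence is `linearIndependent_chains`, which
reads off coefficients, since those of an element of `(y³,z³)` vanish in all bidegrees `a, b < 3`
(`coeff_eq_zero_of_mem`).
-/

/-- The ideal `(y³, z³)` of `𝔽₃[y,z]`. -/
noncomputable abbrev cubeIdeal : Ideal (MvPolynomial (Fin 2) (ZMod 3)) :=
  Ideal.span {(X 0 : MvPolynomial (Fin 2) (ZMod 3)) ^ 3,
    (X 1 : MvPolynomial (Fin 2) (ZMod 3)) ^ 3}

/-- The ring `Q = 𝔽₃[y,z]/(y³, z³)`. -/
abbrev TruncRing : Type := MvPolynomial (Fin 2) (ZMod 3) ⧸ cubeIdeal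

/-- The class of `y` in `Q`. -/
noncomputable abbrev yQ : TruncRing := Ideal.Quotient.mk _ (X 0)

/-- The class of `z` in `Q`. -/
noncomputable abbrev zQ : TruncRing := Ideal.Quotient.mk _ (X 1)

lemma yQ_cube : yQ ^ 3 = 0 := by
  rw [← map_pow]
  exact Ideal.Quotient.eq_zero_iff_mem.2 (Ideal.subset_span (by simp))

lemma zQ_cube : zQ ^ 3 = 0 := by
  rw [← map_pow]
  exact Ideal.Quotient.eq_zero_iff_mem.2 (Ideal.subset_span (by simp))

lemma three_eq_zero : (3 : TruncRing) = 0 := by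
  have h := map_ofNat (algebraMap (ZMod 3) TruncRing) 3
  rw [← h, show (OfNat.ofNat 3 : ZMod 3) = 0 from rfl, map_zero]

lemma smul_eq_mk_C_mul (c : ZMod 3) (q : TruncRing) :
    c • q = Ideal.Quotient.mk cubeIdeal (C c) * q := by
  obtain ⟨p, rfl⟩ := Ideal.Quotient.mk_surjective q
  rw [← map_mul, C_mul']
  rfl

lemma coeff_eq_zero_of_mem {p : MvPolynomial (Fin 2) (ZMod 3)} (hp : p ∈ cubeIdeal)
    {s : Fin 2 →₀ ℕ} (h0 : s 0 < 3) (h1 : s 1 < 3) : coeff s p = 0 := by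
  obtain ⟨a, b, rfl⟩ := Ideal.mem_span_pair.1 hp
  rw [X_pow_eq_monomial, X_pow_eq_monomial, coeff_add, coeff_mul_monomial', coeff_mul_monomial',
    if_neg, if_neg, add_zero]
  · intro h
    have := h 1
    simp at this
    omega
  · intro h
    have := h 0
    simp at this
    omega

lemma coeff_X_pow_mul_X_pow (a b c d : ℕ) :
    coeff (Finsupp.single 0 a + Finsupp.single 1 b)
      ((X 0 : MvPolynomial (Fin 2) (ZMod 3)) ^ c * X 1 ^ d) = if c = a ∧ d = b then 1 else 0 := by
  rw [X_pow_eq_monomial, X_pow_eq_monomial, monomial_mul, coeff_monomial, one_mul]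
  refine if_congr ⟨fun h => ⟨?_, ?_⟩, ?_⟩ rfl rfl
  · simpa using DFunLike.congr_fun h 0
  · simpa using DFunLike.congr_fun h 1
  · rintro ⟨rfl, rfl⟩
    rfl

/-- The nine members of the five Jordan chains of `δ`, longest chain first. -/
noncomputable abbrev chains : Fin 9 → TruncRing :=
  ![yQ ^ 2, 2 * (yQ * zQ), 2 * zQ ^ 2, yQ, zQ, yQ ^ 2 * zQ, 2 * (yQ * zQ ^ 2), 1, yQ ^ 2 * zQ ^ 2]

lemma span_chains : Submodule.span (ZMod 3) (Set.range chains) = ⊤ := by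
  set S := Submodule.span (ZMod 3) (Set.range chains) with hS
  have hm : ∀ i, chains i ∈ S := fun i => Submodule.subset_span ⟨i, rfl⟩
  -- The element `2` is its own inverse in `𝔽₃`.
  have halve : ∀ q : TruncRing, 2 * q ∈ S → q ∈ S := by
    intro q hq
    have h : q = 2 * q + 2 * q := by linear_combination -q * three_eq_zero
    rw [h]
    exact S.add_mem hq hq
  have hmon : ∀ a b : ℕ, yQ ^ a * zQ ^ b ∈ S := by
    intro a b
    by_cases ha : 3 ≤ a
    · rw [pow_eq_zero_of_le ha yQ_cube, zero_mul]
      exact S.zero_mem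
    by_cases hb : 3 ≤ b
    · rw [pow_eq_zero_of_le hb zQ_cube, mul_zero]
      exact S.zero_mem
    push Not at ha hb
    interval_cases a <;> interval_cases b <;>
      try simp only [pow_zero, pow_one, one_mul, mul_one]
    · exact hm 7
    · exact hm 4
    · exact halve _ (hm 2)
    · exact hm 3
    · exact halve _ (hm 1)
    · exact halve _ (hm 6)
    · exact hm 0
    · exact hm 5
    · exact hm 8
  rw [eq_top_iff]
  rintro q -
  obtain ⟨p, rfl⟩ := Ideal.Quotient.mk_surjective q
  induction p using MvPolynomial.induction_on' with
  | monomial s c =>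
    have h : Ideal.Quotient.mk cubeIdeal (monomial s c) = c • (yQ ^ s 0 * zQ ^ s 1) := by
      rw [monomial_eq, Finsupp.prod_fintype _ _ (by simp), Fin.prod_univ_two, map_mul, map_mul,
        map_pow, map_pow, smul_eq_mk_C_mul]
    rw [h]
    exact S.smul_mem c (hmon _ _)
  | add p q hp hq =>
    rw [map_add]
    exact S.add_mem hp hq

lemma linearIndependent_chains : LinearIndependent (ZMod 3) chains := by
  rw [Fintype.linearIndependent_iff]
  intro c hc
  -- A lift of the relation to `𝔽₃[y,z]`, in monomial form.
  let m : ℕ → ℕ → MvPolynomial (Fin 2) (ZMod 3) := fun a b => X 0 ^ a * X 1 ^ b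
  let p : MvPolynomial (Fin 2) (ZMod 3) :=
    C (c 0) * m 2 0 + C (c 1 * 2) * m 1 1 + C (c 2 * 2) * m 0 2 + C (c 3) * m 1 0 +
    C (c 4) * m 0 1 + C (c 5) * m 2 1 + C (c 6 * 2) * m 1 2 + C (c 7) * m 0 0 + C (c 8) * m 2 2
  have hp : p ∈ cubeIdeal := by
    rw [← Ideal.Quotient.eq_zero_iff_mem, ← hc]
    have hC : Ideal.Quotient.mk cubeIdeal (C 2) = 2 :=
      map_ofNat ((Ideal.Quotient.mk cubeIdeal).comp C) 2
    simp only [Fin.sum_univ_succ, smul_eq_mk_C_mul]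
    simp [p, m, hC, Fin.succ]
    ring
  have key : ∀ a b : ℕ, a < 3 → b < 3 →
      coeff (Finsupp.single 0 a + Finsupp.single 1 b) p = 0 := fun a b ha hb =>
    coeff_eq_zero_of_mem hp (by simpa using ha) (by simpa using hb)
  simp only [p, m, coeff_add, coeff_C_mul, coeff_X_pow_mul_X_pow] at key
  have two : ∀ r : ZMod 3, r * 2 = 0 → r = 0 := by decide
  intro i
  fin_cases i
  · simpa using key 2 0
  · exact two _ (by simpa using key 1 1)
  · exact two _ (by simpa using key 0 2)
  · simpa using key 1 0
  · simpa using key 0 1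
  · simpa using key 2 1
  · exact two _ (by simpa using key 1 2)
  · simpa using key 0 0
  · simpa using key 2 2

/-- Let `k = 𝔽₃`, `A = k[t]/(t³)`, and `Q = k[y,z]/(y³,z³)`
(realized as `MvPolynomial (Fin 2) (ZMod 3)` modulo the ideal `(y³, z³)`, with
`y = X 0`, `z = X 1`).  Let `δ` be the `k`-linear derivation of `Q` with `δy = z`
and `δz = 0`.  Then `δ³ = 0`, so `Q` is an `A`-module with `t` acting as `δ`, and
as an `A`-module `Q ≅ A ⊕ (A/(t²))² ⊕ (A/(t))²`; equivalently, the nilpotent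
operator `δ` on the 9-dimensional space `Q` has Jordan type `(3, 2, 2, 1, 1)`:
there are `v₁, v₂, v₃, v₄, v₅ ∈ Q` with `δ³v₁ = 0`, `δ²v₂ = δ²v₃ = 0`,
`δv₄ = δv₅ = 0` such that `v₁, δv₁, δ²v₁, v₂, δv₂, v₃, δv₃, v₄, v₅` is a
`k`-basis of `Q`. -/
theorem stmt_15
    (δ : Derivation (ZMod 3)
      (MvPolynomial (Fin 2) (ZMod 3) ⧸
        (Ideal.span {(X 0 : MvPolynomial (Fin 2) (ZMod 3)) ^ 3,
          (X 1 : MvPolynomial (Fin 2) (ZMod 3)) ^ 3}))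
      (MvPolynomial (Fin 2) (ZMod 3) ⧸
        (Ideal.span {(X 0 : MvPolynomial (Fin 2) (ZMod 3)) ^ 3,
          (X 1 : MvPolynomial (Fin 2) (ZMod 3)) ^ 3})))
    (hy : δ (Ideal.Quotient.mk _ (X 0)) = Ideal.Quotient.mk _ (X 1))
    (hz : δ (Ideal.Quotient.mk _ (X 1)) = 0) :
    (∀ q, δ (δ (δ q)) = 0) ∧
    ∃ v₁ v₂ v₃ v₄ v₅ :
        MvPolynomial (Fin 2) (ZMod 3) ⧸
          (Ideal.span {(X 0 : MvPolynomial (Fin 2) (ZMod 3)) ^ 3,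
            (X 1 : MvPolynomial (Fin 2) (ZMod 3)) ^ 3}),
      δ (δ (δ v₁)) = 0 ∧ δ (δ v₂) = 0 ∧ δ (δ v₃) = 0 ∧ δ v₄ = 0 ∧ δ v₅ = 0 ∧
      LinearIndependent (ZMod 3) ![v₁, δ v₁, δ (δ v₁), v₂, δ v₂, v₃, δ v₃, v₄, v₅] ∧
      Submodule.span (ZMod 3)
        (Set.range ![v₁, δ v₁, δ (δ v₁), v₂, δ v₂, v₃, δ v₃, v₄, v₅]) = ⊤ := by
  change δ yQ = zQ at hy
  change δ zQ = 0 at hz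
  have d2 : ∀ q : TruncRing, δ (2 * q) = 2 * δ q := fun q => by rw [two_mul, map_add, two_mul]
  have hyy : δ (yQ ^ 2) = 2 * (yQ * zQ) := by
    rw [pow_two, Derivation.leibniz, hy, smul_eq_mul]
    ring
  have hyz : δ (yQ * zQ) = zQ ^ 2 := by
    rw [Derivation.leibniz, hy, hz, smul_eq_mul, smul_eq_mul]
    ring
  have hzz : δ (zQ ^ 2) = 0 := by
    rw [pow_two, Derivation.leibniz, hz, smul_zero, add_zero]
  have hyyz : δ (yQ ^ 2 * zQ) = 2 * (yQ * zQ ^ 2) := by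
    rw [Derivation.leibniz, hyy, hz, smul_eq_mul, smul_eq_mul]
    ring
  have hyzz : δ (yQ * zQ ^ 2) = 0 := by
    rw [Derivation.leibniz, hy, hzz, smul_eq_mul, smul_eq_mul]
    linear_combination zQ_cube
  have hyyzz : δ (yQ ^ 2 * zQ ^ 2) = 0 := by
    rw [Derivation.leibniz, hyy, hzz, smul_eq_mul, smul_eq_mul]
    linear_combination 2 * yQ * zQ_cube
  have h1 : δ (1 : TruncRing) = 0 := δ.map_one_eq_zero
  refine ⟨?_, yQ ^ 2, yQ, yQ ^ 2 * zQ, 1, yQ ^ 2 * zQ ^ 2, ?_, ?_, ?_, h1, hyyzz, ?_, ?_⟩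
  · have h : (δ : TruncRing →ₗ[ZMod 3] TruncRing) ∘ₗ (δ : TruncRing →ₗ[ZMod 3] TruncRing) ∘ₗ
        (δ : TruncRing →ₗ[ZMod 3] TruncRing) = 0 := by
      refine LinearMap.ext_on_range span_chains fun i => ?_
      fin_cases i <;> simp [chains, d2, hy, hz, hyy, hyz, hzz, hyyz, hyzz, hyyzz]
    exact fun q => DFunLike.congr_fun h q
  · rw [hyy, d2, hyz, d2, hzz, mul_zero]
  · rw [hy, hz]
  · rw [hyyz, d2, hyzz, mul_zero]
  · rw [hyy, d2, hyz, hy, hyyz]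
    exact linearIndependent_chains
  · rw [hyy, d2, hyz, hy, hyyz]
    exact span_chains
end

section
/- Fix an integer n ≥ 5. The unique monomial x = b₁₀^N · h₁₀^ε · ∏_{j≥2} w_j^{m(j)} with s(x) = 5, t(x) = −2, and u(x) = 2(3ⁿ+1) is b₁₀^{−4} · h₁₀ · w₂² · w_{n−1}³; that is, necessarily ε = 1, N = −4, m(2) = 2, m(n−1) = 3, and m(j) = 0 for all other j. -/
/-!
The conditions on `s` and `t` give `2N + ε = -7`, hence `ε = 1` and `N = -4`, and the condition on
`u` becomes `∑ m j * 3 ^ j = 3 ^ n + 18` with `∑ m j = 5`. As `m` vanishes below `2`, reduction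
modulo `27` gives `9 * m 2 ≡ 18`, so `m 2` is `2` or `5`; the value `5` would make the sum `45`,
which is too small. Hence three powers of `3`, counted with multiplicity, add up to `3 ^ n`, and
`three_powers` shows that each of them is `3 ^ (n - 1)`.
-/

/-- If three powers of `3`, counted with multiplicity, add up to `3 ^ (k + 1)`, then all of them
are `3 ^ k`: an exponent above `k` already makes the sum too large, and otherwise the bound
`3 * 3 ^ k` is attained only when every exponent is `k`. -/
theorem three_powers (S : Finset ℕ) (m : ℕ → ℕ) (k : ℕ)
    (h1 : ∑ j ∈ S, (m j : ℤ) = 3) (h2 : ∑ j ∈ S, (m j : ℤ) * 3 ^ j = 3 ^ (k + 1)) :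
    ∀ j ∈ S, j ≠ k → m j = 0 := by
  have hle : ∀ j ∈ S, m j ≠ 0 → j ≤ k := by
    intro j hj hm
    by_contra! hk
    have e1 := Finset.add_sum_erase S (fun j => (m j : ℤ)) hj
    have e2 := Finset.add_sum_erase S (fun j => (m j : ℤ) * 3 ^ j) hj
    have h3 : ∑ i ∈ S.erase j, (m i : ℤ) ≤ ∑ i ∈ S.erase j, (m i : ℤ) * 3 ^ i := by
      refine Finset.sum_le_sum fun i _ => ?_
      have : (1 : ℤ) ≤ 3 ^ i := one_le_pow₀ (by norm_num)
      exact le_mul_of_one_le_right (by positivity) this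
    have h4 : (3 : ℤ) ^ (k + 1) ≤ 3 ^ j := pow_le_pow_right₀ (by norm_num) hk
    have h5 : (1 : ℤ) ≤ m j := by omega
    have h6 : (1 : ℤ) ≤ 3 ^ (k + 1) := one_le_pow₀ (by norm_num)
    -- The other terms add up to at least `3 - m j`, so `(m j - 1) * (3 ^ (k + 1) - 1) + 2 ≤ 0`.
    nlinarith [mul_nonneg (sub_nonneg.2 h5) (sub_nonneg.2 h6),
      mul_le_mul_of_nonneg_left h4 (by omega : (0 : ℤ) ≤ m j)]
  have hz : ∑ j ∈ S, (m j : ℤ) * (3 ^ k - 3 ^ j) = 0 := by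
    simp only [mul_sub, Finset.sum_sub_distrib, ← Finset.sum_mul, h1, h2]
    ring
  have hnn : ∀ j ∈ S, 0 ≤ (m j : ℤ) * (3 ^ k - 3 ^ j) := by
    intro j hj
    by_cases hm : m j = 0
    · simp [hm]
    · exact mul_nonneg (by positivity)
        (sub_nonneg.2 (pow_le_pow_right₀ (by norm_num) (hle j hj hm)))
  intro j hj hjk
  by_contra hm
  have h0 := (Finset.sum_eq_zero_iff_of_nonneg hnn).1 hz j hj
  have hlt : (3 : ℤ) ^ j < 3 ^ k :=
    pow_lt_pow_right₀ (by norm_num) (lt_of_le_of_ne (hle j hj hm) hjk)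
  rcases mul_eq_zero.1 h0 with h | h
  · exact hm (by exact_mod_cast h)
  · omega


/-- full degree-theoretic conclusion of the paper's Lemma 5.2.
Fix `n ≥ 5`.  A monomial `x = b₁₀^N h₁₀^ε ∏_{j≥2} w_j^{m j}` of the MPASS `E₂`-page
has `s(x) = Σ m j`, `t(x) = 2N + ε + Σ m j`, `u(x) = 12N + 4ε + Σ m j · 2(3ʲ+1)`,
where the exponent function `m` is supported on `[2, M)`.  If `s(x) = 5`,
`t(x) = −2` and `u(x) = 2(3ⁿ+1)`, then necessarily `ε = 1`, `N = −4`, `m 2 = 2`,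
`m (n−1) = 3` and `m j = 0` otherwise, i.e. `x = b₁₀^{−4}·h₁₀·w₂²·w_{n−1}³`. -/
theorem stmt_16 (n : ℕ) (hn : 5 ≤ n)
    (N : ℤ) (ε : ℕ) (hε : ε ≤ 1)
    (m : ℕ → ℕ) (M : ℕ) (hm0 : m 0 = 0) (hm1 : m 1 = 0)
    (hsupp : ∀ j, M ≤ j → m j = 0)
    (hs : (∑ j ∈ Finset.range M, (m j : ℤ)) = 5)
    (ht : 2 * N + (ε : ℤ) + ∑ j ∈ Finset.range M, (m j : ℤ) = -2)
    (hu : 12 * N + 4 * (ε : ℤ) + ∑ j ∈ Finset.range M, (m j : ℤ) * (2 * (3 ^ j + 1))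
        = 2 * (3 ^ n + 1)) :
    ε = 1 ∧ N = -4 ∧ m 2 = 2 ∧ m (n - 1) = 3 ∧
      ∀ j, j ≠ 2 → j ≠ n - 1 → m j = 0 := by
  have hε1 : ε = 1 := by omega
  have hN : N = -4 := by omega
  have hsum : ∑ j ∈ Finset.range M, (m j : ℤ) * 3 ^ j = 3 ^ n + 18 := by
    have e : ∑ j ∈ Finset.range M, (m j : ℤ) * (2 * (3 ^ j + 1))
        = 2 * ∑ j ∈ Finset.range M, (m j : ℤ) * 3 ^ j + 2 * ∑ j ∈ Finset.range M, (m j : ℤ) := by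
      rw [Finset.mul_sum, Finset.mul_sum, ← Finset.sum_add_distrib]
      exact Finset.sum_congr rfl fun j _ => by ring
    rw [e, hs, hN, hε1] at hu
    push_cast at hu
    linarith
  have h2M : 2 ∈ Finset.range M := by
    rw [Finset.mem_range]
    by_contra! h
    have : ∑ j ∈ Finset.range M, (m j : ℤ) = 0 := by
      refine Finset.sum_eq_zero fun j hj => ?_
      have : j < 2 := (Finset.mem_range.1 hj).trans_le h
      interval_cases j <;> simp [hm0, hm1]
    omega
  have e1 := Finset.add_sum_erase _ (fun j => (m j : ℤ)) h2M
  have e2 := Finset.add_sum_erase _ (fun j => (m j : ℤ) * 3 ^ j) h2M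
  simp only [hs, hsum] at e1 e2
  set S := (Finset.range M).erase 2 with hS
  have hdvd : (27 : ℤ) ∣ ∑ j ∈ S, (m j : ℤ) * 3 ^ j := by
    refine Finset.dvd_sum fun j hj => ?_
    have hj2 : j ≠ 2 := Finset.ne_of_mem_erase hj
    by_cases h3 : 3 ≤ j
    · exact Dvd.dvd.mul_left (pow_dvd_pow (3 : ℤ) h3) _
    · have : j < 2 := by omega
      interval_cases j <;> simp [hm0, hm1]
  have hdn : (27 : ℤ) ∣ 3 ^ n := pow_dvd_pow (3 : ℤ) (by omega : 3 ≤ n)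
  have hbig : (3 : ℤ) ^ 5 ≤ 3 ^ n := pow_le_pow_right₀ (by norm_num) hn
  have hnn : 0 ≤ ∑ j ∈ S, (m j : ℤ) := Finset.sum_nonneg fun j _ => by positivity
  have hm2 : m 2 = 2 := by
    have h25 : m 2 = 2 ∨ m 2 = 5 := by omega
    rcases h25 with h | h
    · exact h
    · exfalso
      have hz : ∑ j ∈ S, (m j : ℤ) = 0 := by omega
      have hz' := (Finset.sum_eq_zero_iff_of_nonneg fun j _ => by positivity).1 hz
      have : ∑ j ∈ S, (m j : ℤ) * 3 ^ j = 0 :=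
        Finset.sum_eq_zero fun j hj => by rw [hz' j hj, zero_mul]
      rw [this, h] at e2
      norm_num at e2 hbig
      omega
  rw [hm2] at e1 e2
  obtain ⟨k, rfl⟩ : ∃ k, n = k + 1 := ⟨n - 1, by omega⟩
  have hS3 : ∑ j ∈ S, (m j : ℤ) = 3 := by push_cast at e1; omega
  have key := three_powers S m k hS3 (by push_cast at e2; linarith)
  have hzero : ∀ j, j ≠ 2 → j ≠ k → m j = 0 := by
    intro j hj2 hjk
    by_cases hj : j < M
    · exact key j (Finset.mem_erase.2 ⟨hj2, Finset.mem_range.2 hj⟩) hjk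
    · exact hsupp j (by omega)
  refine ⟨hε1, hN, hm2, ?_, by simpa using hzero⟩
  have hk : ∑ j ∈ S, (m j : ℤ) = m k := by
    refine Finset.sum_eq_single k (fun j hj hjk => by simp [key j hj hjk]) fun hk => ?_
    have : ¬ k < M := fun h => hk (Finset.mem_erase.2 ⟨by omega, Finset.mem_range.2 h⟩)
    simp [hsupp k (by omega)]
  rw [Nat.add_sub_cancel]
  omega
end
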